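/- arXiv:1503.03283 — 2 statements merged into one kernel-verified Lean document; each statement's English description precedes it below -/
import Mathlib

section
/- Let n ≥ 3 be odd. Suppose π_0, …, π_{n−1} and π are permutations of Fin n such that: (i) for all i ≠ j, the permutation π_i⁻¹ ∘ π_j is a single cycle whose support is all of Fin n; (ii) for each i, the permutation π⁻¹ ∘ π_i has exactly one fixed point; and (iii) there is a partition of Fin n into two disjoint sets I₁ and I₂ such that for each i, every orbit of π⁻¹ ∘ π_i of size at least 2 contains an element of I₁ and an element of I₂. Then K_{n,n} admits an acyclic proper edge coloring with n+2 colors, and consequently a'(K_{n,n}) = n+2. -/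
open SimpleGraph

/-- A proper edge coloring of `G` with `k` colors: any two distinct edges
sharing a vertex receive different colors. -/
def IsProperEdgeColoring {V : Type*} (G : SimpleGraph V) {k : ℕ}
    (C : G.edgeSet → Fin k) : Prop :=
  ∀ e f : G.edgeSet, e ≠ f →
    (∃ v : V, v ∈ (e : Sym2 V) ∧ v ∈ (f : Sym2 V)) → C e ≠ C f

/-- An edge coloring is acyclic if no cycle of `G` is bichromatic, i.e. no cycle
has all its edges colored with only two colors. -/
def IsAcyclicEdgeColoring {V : Type*} (G : SimpleGraph V) {k : ℕ}
    (C : G.edgeSet → Fin k) : Prop :=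
  ∀ (v : V) (w : G.Walk v v), w.IsCycle →
    ¬ ∃ c₁ c₂ : Fin k, ∀ (e : Sym2 V) (he : e ∈ w.edges),
      C ⟨e, w.edges_subset_edgeSet he⟩ = c₁ ∨ C ⟨e, w.edges_subset_edgeSet he⟩ = c₂

/-- The acyclic chromatic index: the least `k` such that `G` admits an acyclic
proper edge coloring with `k` colors. -/
noncomputable def acyclicChromaticIndex {V : Type*} (G : SimpleGraph V) : ℕ :=
  sInf {k : ℕ | ∃ C : G.edgeSet → Fin k,
    IsProperEdgeColoring G C ∧ IsAcyclicEdgeColoring G C}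

/-- The orbit of `u` under `f`: the set `{fᵏ(u) : k ∈ ℕ}`. -/
def orbit {α : Type*} (f : α → α) (u : α) : Set α :=
  {v | ∃ k : ℕ, f^[k] u = v}

/-!
In a proper edge coloring of `K_{n,n}` every color class extends to a perfect matching, that is, to
a bijection `φ c` from rows to columns. The cycles of the union of `φ c` and `φ d` are the orbits of
`(φ d)⁻¹ * φ c`, so the coloring is acyclic if and only if each of these orbits passes a cell of
`φ c` or `φ d` that has another color.

With `n` colors every color occurs in every row, and no orbit is broken. With `n + 1` colors each
row misses one color, and distinct rows miss distinct colors; the orbit condition then produces two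
`n`-cycles whose quotient is an `(n - 1)`-cycle, which contradicts parity for odd `n`.

Conversely the `n` matchings `π i` decompose `K_{n,n}`. Recolor the matching `π` with two new
colors, one on the rows in `I₁` and one on the other rows. The single orbit of `(π i)⁻¹ * π j` is
broken at the cell shared by `π i` and `π`, and an orbit of `π⁻¹ * π i` of size at least `2` is
broken because neither new color occurs in all of its rows.
-/

section Acyclic

variable {V : Type*} {G : SimpleGraph V}

/-- An end vertex of a longest path has no neighbor outside the path, and in an acyclic graph its
only neighbor on the path is the next vertex. -/
theorem exists_subsingleton_neighborSet_of_isAcyclic [Finite V] [Nonempty V]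
    (hG : G.IsAcyclic) : ∃ v, (G.neighborSet v).Subsingleton := by
  obtain ⟨u, v, p, hp, hmax⟩ := Walk.exists_isPath_forall_isPath_length_le_length G
  have eq_snd : ∀ y, G.Adj u y → y = p.snd := by
    intro y hy
    refine hG.eq_snd_of_adj_start hp hy ?_
    by_contra hyp
    simpa using hmax _ _ (Walk.cons hy.symm p) (hp.cons hyp)
  exact ⟨u, fun y hy z hz => (eq_snd y hy).trans (eq_snd z hz).symm⟩

theorem not_isAcyclic_iff_exists_set_nontrivial_neighborSet [Finite V] :
    ¬ G.IsAcyclic ↔ ∃ S : Set V, S.Nonempty ∧ ∀ v ∈ S, (S ∩ G.neighborSet v).Nontrivial := by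
  constructor
  · intro hG
    simp only [IsAcyclic, not_forall, not_not] at hG
    obtain ⟨u, w, hw⟩ := hG
    refine ⟨{v | v ∈ w.support}, ⟨u, w.start_mem_support⟩, fun v hv => ?_⟩
    have one_lt_ncard : 1 < (w.toSubgraph.neighborSet v).ncard := by
      rw [hw.ncard_neighborSet_toSubgraph_eq_two hv]
      exact one_lt_two
    refine (Set.one_lt_ncard_iff_nontrivial.1 one_lt_ncard).mono fun x hx => ⟨?_, ?_⟩
    · exact w.mem_verts_toSubgraph.1 (w.toSubgraph.edge_vert hx.symm)
    · exact w.toSubgraph.adj_sub hx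
  · rintro ⟨S, hS, hnontrivial⟩ hG
    have := hS.to_subtype
    obtain ⟨v, hv⟩ := exists_subsingleton_neighborSet_of_isAcyclic (hG.induce S)
    obtain ⟨x, ⟨hxS, hx⟩, y, ⟨hyS, hy⟩, hxy⟩ := hnontrivial v v.2
    exact hxy (congrArg Subtype.val (@hv ⟨x, hxS⟩ hx ⟨y, hyS⟩ hy))

/-- The spanning subgraph formed by the edges of the two colors `c` and `d`. -/
def bichromaticSubgraph {κ : Type*} (C : G.edgeSet → κ) (c d : κ) : SimpleGraph V :=
  fromEdgeSet (Subtype.val '' (C ⁻¹' {c, d}))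

theorem edgeSet_bichromaticSubgraph {κ : Type*} (C : G.edgeSet → κ) (c d : κ) :
    (bichromaticSubgraph C c d).edgeSet = Subtype.val '' (C ⁻¹' {c, d}) := by
  rw [bichromaticSubgraph, edgeSet_fromEdgeSet, sdiff_eq_left, Set.disjoint_left]
  rintro _ ⟨e, -, rfl⟩
  exact G.not_isDiag_of_mem_edgeSet e.2

theorem bichromaticSubgraph_le {κ : Type*} (C : G.edgeSet → κ) (c d : κ) :
    bichromaticSubgraph C c d ≤ G := by
  rw [← edgeSet_subset_edgeSet, edgeSet_bichromaticSubgraph]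
  exact Subtype.coe_image_subset _ _

theorem isAcyclicEdgeColoring_iff_isAcyclic_bichromaticSubgraph {k : ℕ} {C : G.edgeSet → Fin k} :
    IsAcyclicEdgeColoring G C ↔ ∀ c d, (bichromaticSubgraph C c d).IsAcyclic := by
  have mem_edgeSet_iff : ∀ {c d e} (he : e ∈ G.edgeSet),
      e ∈ (bichromaticSubgraph C c d).edgeSet ↔ C ⟨e, he⟩ = c ∨ C ⟨e, he⟩ = d := by
    intro c d e he
    simp [edgeSet_bichromaticSubgraph, he]
  constructor
  · intro hC c d v w hw
    have hle := bichromaticSubgraph_le C c d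
    refine hC v (w.mapLe hle) (hw.mapLe hle) ⟨c, d, fun e he => (mem_edgeSet_iff _).1 ?_⟩
    rw [Walk.edges_mapLe_eq_edges] at he
    exact w.edges_subset_edgeSet he
  · rintro hC v w hw ⟨c, d, hcd⟩
    have hmem : ∀ e ∈ w.edges, e ∈ (bichromaticSubgraph C c d).edgeSet :=
      fun e he => (mem_edgeSet_iff _).2 (hcd e he)
    exact hC c d _ (hw.transfer hmem)

end Acyclic

section ColorArray

variable {α β κ : Type*}

/-- The edges of `K_{α,β}` as pairs of vertices, one from each side. -/
noncomputable def completeBipartiteEdgeEquiv (α β : Type*) :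
    α × β ≃ (completeBipartiteGraph α β).edgeSet :=
  Equiv.ofBijective (fun p => ⟨s(Sum.inl p.1, Sum.inr p.2), by simp⟩) <| by
    constructor
    · rintro ⟨a, b⟩ ⟨a', b'⟩ h
      simpa using h
    · rintro ⟨e, he⟩
      rw [edgeSet_completeBipartiteGraph] at he
      obtain ⟨p, rfl⟩ := he
      exact ⟨p, rfl⟩

@[simp]
theorem coe_completeBipartiteEdgeEquiv (a : α) (b : β) :
    (completeBipartiteEdgeEquiv α β (a, b) : Sym2 (α ⊕ β)) = s(Sum.inl a, Sum.inr b) :=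
  rfl

/-- An edge coloring of `K_{α,β}` as an array whose rows are indexed by `α` and whose columns are
indexed by `β`. -/
noncomputable def colorArray (C : (completeBipartiteGraph α β).edgeSet → κ) (a : α) (b : β) : κ :=
  C (completeBipartiteEdgeEquiv α β (a, b))

theorem colorArray_surjective :
    Function.Surjective (colorArray : ((completeBipartiteGraph α β).edgeSet → κ) → α → β → κ) :=
  fun M => ⟨fun e => M.uncurry ((completeBipartiteEdgeEquiv α β).symm e), by
    ext; simp [colorArray]⟩

theorem isProperEdgeColoring_iff_injective_colorArray {k : ℕ}
    {C : (completeBipartiteGraph α β).edgeSet → Fin k} :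
    IsProperEdgeColoring _ C ↔
      (∀ a, (colorArray C a).Injective) ∧ ∀ b, (fun a => colorArray C a b).Injective := by
  constructor
  · refine fun hC => ⟨fun a b b' h => ?_, fun b a a' h => ?_⟩ <;> by_contra hne
    · exact hC _ _ (by simpa using hne) ⟨Sum.inl a, by simp, by simp⟩ h
    · exact hC _ _ (by simpa using hne) ⟨Sum.inr b, by simp, by simp⟩ h
  · rintro ⟨hrow, hcol⟩ e f hne ⟨v, hve, hvf⟩ hc
    obtain ⟨⟨a, b⟩, rfl⟩ := (completeBipartiteEdgeEquiv α β).surjective e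
    obtain ⟨⟨a', b'⟩, rfl⟩ := (completeBipartiteEdgeEquiv α β).surjective f
    rw [coe_completeBipartiteEdgeEquiv, Sym2.mem_iff] at hve hvf
    obtain rfl | rfl := hve
    · obtain rfl : a = a' := by simpa using hvf
      obtain rfl := hrow a hc
      exact hne rfl
    · obtain rfl : b = b' := by simpa using hvf
      obtain rfl := hcol b hc
      exact hne rfl

theorem bichromaticSubgraph_adj_inl_inr {C : (completeBipartiteGraph α β).edgeSet → κ} {c d : κ}
    {a : α} {b : β} : (bichromaticSubgraph C c d).Adj (Sum.inl a) (Sum.inr b) ↔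
      colorArray C a b = c ∨ colorArray C a b = d := by
  rw [← mem_edgeSet, edgeSet_bichromaticSubgraph, ← coe_completeBipartiteEdgeEquiv,
    Subtype.val_injective.mem_set_image]
  rfl

end ColorArray

section MatchingSystem

variable {α β κ : Type*} {M : α → β → κ} {φ : κ → α ≃ β}

/-- The permutation of `α` that goes to `β` along `f` and returns along `g`. Its orbits are the
components of the union of the two perfect matchings `f` and `g` of `K_{α,β}`. -/
def alternation (f g : α ≃ β) : Equiv.Perm α :=
  f.trans g.symm

theorem apply_alternation (f g : α ≃ β) (a : α) : g (alternation f g a) = f a :=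
  g.apply_symm_apply _

theorem alternation_apply_eq_self_iff {f g : α ≃ β} {a : α} :
    alternation f g a = a ↔ f a = g a :=
  g.symm_apply_eq

theorem alternation_inv (f g : α ≃ β) : (alternation f g)⁻¹ = alternation g f :=
  rfl

theorem alternation_mul_alternation (f g h : α ≃ β) :
    alternation g h * alternation f g = alternation f h := by
  ext a
  simp [alternation]

/-- For every color `c`, the cells of the array `M` colored `c` lie on the perfect matching `φ c`,
so that `φ c` completes the color class of `c` to a perfect matching. -/
def ExtendsColors (M : α → β → κ) (φ : κ → α ≃ β) : Prop :=
  ∀ a b, φ (M a b) a = b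

/-- For any two colors `c ≠ d`, following alternately `φ c` from rows to columns and `φ d` back
always meets a cell whose color is not the expected one. For perfect matchings `φ c` extending the
color classes this expresses that no cycle is colored with only `c` and `d`. -/
def BreaksOrbits (M : α → β → κ) (φ : κ → α ≃ β) : Prop :=
  ∀ c d, c ≠ d → ∀ u, ∃ v, (alternation (φ c) (φ d)).SameCycle u v ∧
    (M v (φ c v) ≠ c ∨ M v (φ d v) ≠ d)

theorem exists_equiv_eq_of_injective [Finite α] [Finite β] (hcard : Nat.card α = Nat.card β)
    (hrow : ∀ a, (M a).Injective) (hcol : ∀ b, (fun a => M a b).Injective) (c : κ) :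
    ∃ σ : α ≃ β, ∀ a b, M a b = c → σ a = b := by
  classical
  have := Fintype.ofFinite α
  have := Fintype.ofFinite β
  obtain ⟨e⟩ : Nonempty (α ≃ β) := Finite.card_eq.1 hcard
  let s : Set α := {a | ∃ b, M a b = c}
  let f : α → β := fun a => if h : ∃ b, M a b = c then h.choose else e a
  have hf : ∀ a ∈ s, M a (f a) = c := fun a ha => by
    simp only [f, dif_pos (show ∃ b, M a b = c from ha)]
    exact ha.choose_spec
  have hinj : s.InjOn f := fun a ha a' ha' h =>
    hcol (f a) ((hf a ha).trans (h ▸ hf a' ha').symm)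
  obtain ⟨g, hg⟩ := Set.MapsTo.exists_equiv_extend_of_card_eq (t := Finset.univ)
    (by simpa using hcard) (fun a _ => by simp) hinj
  refine ⟨g.trans (Equiv.subtypeUnivEquiv Finset.mem_univ), fun a b hab => ?_⟩
  exact (hg a ⟨b, hab⟩).trans (hrow a ((hf a ⟨b, hab⟩).trans hab.symm))

namespace ExtendsColors

theorem injective_row (h : ExtendsColors M φ) (a : α) : (M a).Injective := by
  intro b b' hb
  rw [← h a b, hb, h a b']

theorem injective_col (h : ExtendsColors M φ) (b : β) : (fun a => M a b).Injective := by
  intro a a' ha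
  refine (φ (M a b)).injective ((h a b).trans ?_)
  rw [show M a b = M a' b from ha, h a' b]

theorem apply_eq (h : ExtendsColors M φ) {a : α} {b : β} {c : κ} (hc : M a b = c) : φ c a = b :=
  hc ▸ h a b

theorem comp_equiv {κ' : Type*} (h : ExtendsColors M φ) (e : κ ≃ κ') :
    ExtendsColors (fun a b => e (M a b)) (φ ∘ e.symm) := by
  intro a b
  simpa using h a b

end ExtendsColors

theorem BreaksOrbits.comp_equiv {κ' : Type*} (h : BreaksOrbits M φ) (e : κ ≃ κ') :
    BreaksOrbits (fun a b => e (M a b)) (φ ∘ e.symm) := by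
  intro c d hcd u
  simpa [← e.eq_symm_apply] using h (e.symm c) (e.symm d) (e.symm.injective.ne hcd) u

theorem isProperEdgeColoring_iff_exists_extendsColors [Finite α] [Finite β]
    (hcard : Nat.card α = Nat.card β) {k : ℕ}
    {C : (completeBipartiteGraph α β).edgeSet → Fin k} :
    IsProperEdgeColoring _ C ↔ ∃ φ, ExtendsColors (colorArray C) φ := by
  rw [isProperEdgeColoring_iff_injective_colorArray]
  constructor
  · rintro ⟨hrow, hcol⟩
    choose φ hφ using exists_equiv_eq_of_injective hcard hrow hcol
    exact ⟨φ, fun a b => hφ _ a b rfl⟩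
  · rintro ⟨φ, hφ⟩
    exact ⟨hφ.injective_row, hφ.injective_col⟩

section Bichromatic

theorem mem_and_mem_and_ne_of_nontrivial_of_subset_pair {γ : Type*} {s : Set γ} {x y : γ}
    (hs : s.Nontrivial) (hsub : s ⊆ {x, y}) : x ∈ s ∧ y ∈ s ∧ x ≠ y := by
  obtain ⟨z, hz, w, hw, hzw⟩ := hs
  have hz' := hsub hz
  have hw' := hsub hw
  grind

variable {C : (completeBipartiteGraph α β).edgeSet → κ} {c d : κ}

/-- The rows of an unbroken orbit, together with the columns matched to them, span a subgraph in
which every vertex has its two neighbors along `φ c` and `φ d`. -/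
theorem not_isAcyclic_bichromaticSubgraph [Finite α] [Finite β] (hcd : c ≠ d) {u : α}
    (hu : ∀ v, (alternation (φ c) (φ d)).SameCycle u v →
      colorArray C v (φ c v) = c ∧ colorArray C v (φ d v) = d) :
    ¬ (bichromaticSubgraph C c d).IsAcyclic := by
  set ρ := alternation (φ c) (φ d)
  have hφ : ∀ v, φ d (ρ v) = φ c v := apply_alternation _ _
  have hadj : ∀ {v b}, ρ.SameCycle u v → b = φ c v ∨ b = φ d v →
      (bichromaticSubgraph C c d).Adj (Sum.inl v) (Sum.inr b) := by
    rintro v b hv (rfl | rfl)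
    · exact bichromaticSubgraph_adj_inl_inr.2 (Or.inl (hu v hv).1)
    · exact bichromaticSubgraph_adj_inl_inr.2 (Or.inr (hu v hv).2)
  have hne : ∀ {v}, ρ.SameCycle u v → φ c v ≠ φ d v := fun {v} hv h =>
    hcd ((hu v hv).1.symm.trans (h ▸ (hu v hv).2))
  refine not_isAcyclic_iff_exists_set_nontrivial_neighborSet.2
    ⟨Sum.inl '' {v | ρ.SameCycle u v} ∪ Sum.inr '' (φ c '' {v | ρ.SameCycle u v}),
      ⟨Sum.inl u, Or.inl ⟨u, .refl _ _, rfl⟩⟩, ?_⟩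
  rintro _ (⟨v, hv, rfl⟩ | ⟨_, ⟨v, hv, rfl⟩, rfl⟩)
  · have hv' : ρ.SameCycle u (ρ⁻¹ v) := Equiv.Perm.sameCycle_symm_apply_right.2 hv
    have hd : φ c (ρ⁻¹ v) = φ d v := by simp [← hφ]
    exact ⟨Sum.inr (φ c v), ⟨Or.inr ⟨_, ⟨v, hv, rfl⟩, rfl⟩, hadj hv (Or.inl rfl)⟩,
      Sum.inr (φ d v), ⟨Or.inr ⟨_, ⟨_, hv', hd⟩, rfl⟩, hadj hv (Or.inr rfl)⟩,
      Sum.inr_injective.ne (hne hv)⟩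
  · have hv' : ρ.SameCycle u (ρ v) := Equiv.Perm.sameCycle_apply_right.2 hv
    exact ⟨Sum.inl v, ⟨Or.inl ⟨v, hv, rfl⟩, (hadj hv (Or.inl rfl)).symm⟩,
      Sum.inl (ρ v), ⟨Or.inl ⟨_, hv', rfl⟩, (hadj hv' (Or.inr (hφ v).symm)).symm⟩,
      Sum.inl_injective.ne fun h => hne hv (by rw [← hφ, ← h])⟩

namespace ExtendsColors

theorem neighborSet_inl_subset (h : ExtendsColors (colorArray C) φ) (a : α) :
    (bichromaticSubgraph C c d).neighborSet (Sum.inl a) ⊆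
      {Sum.inr (φ c a), Sum.inr (φ d a)} := by
  rintro (a' | b) hb
  · simpa using bichromaticSubgraph_le C c d hb
  · exact (bichromaticSubgraph_adj_inl_inr.1 hb).imp (fun hc => by rw [h.apply_eq hc])
      fun hd => by rw [Set.mem_singleton_iff, h.apply_eq hd]

theorem neighborSet_inr_subset (h : ExtendsColors (colorArray C) φ) (b : β) :
    (bichromaticSubgraph C c d).neighborSet (Sum.inr b) ⊆
      {Sum.inl ((φ c).symm b), Sum.inl ((φ d).symm b)} := by
  rintro (a | b') ha
  · exact (bichromaticSubgraph_adj_inl_inr.1 ha.symm).imp (fun hc => by rw [← h.apply_eq hc]; simp)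
      fun hd => by rw [← h.apply_eq hd]; simp
  · simpa using bichromaticSubgraph_le C c d ha

theorem exists_forall_sameCycle_of_not_isAcyclic [Finite α] [Finite β]
    (h : ExtendsColors (colorArray C) φ) (hcd : ¬ (bichromaticSubgraph C c d).IsAcyclic) :
    c ≠ d ∧ ∃ u, ∀ v, (alternation (φ c) (φ d)).SameCycle u v →
      colorArray C v (φ c v) = c ∧ colorArray C v (φ d v) = d := by
  obtain ⟨S, hS, hnontrivial⟩ := not_isAcyclic_iff_exists_set_nontrivial_neighborSet.1 hcd
  have row : ∀ a, Sum.inl a ∈ S → Sum.inr (φ c a) ∈ S ∧ φ c a ≠ φ d a ∧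
      colorArray C a (φ c a) = c ∧ colorArray C a (φ d a) = d := by
    intro a ha
    obtain ⟨hca, hda, hne⟩ := mem_and_mem_and_ne_of_nontrivial_of_subset_pair
      (hnontrivial _ ha) (Set.inter_subset_right.trans (h.neighborSet_inl_subset a))
    have hne' : φ c a ≠ φ d a := fun hab => hne (congrArg _ hab)
    exact ⟨hca.1, hne',
      (bichromaticSubgraph_adj_inl_inr.1 hca.2).resolve_right fun hd => hne' (h.apply_eq hd).symm,
      (bichromaticSubgraph_adj_inl_inr.1 hda.2).resolve_left fun hc => hne' (h.apply_eq hc)⟩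
  have col : ∀ b, Sum.inr b ∈ S → Sum.inl ((φ d).symm b) ∈ S := fun b hb =>
    (mem_and_mem_and_ne_of_nontrivial_of_subset_pair (hnontrivial _ hb)
      (Set.inter_subset_right.trans (h.neighborSet_inr_subset b))).2.1.1
  obtain ⟨u, hu⟩ : ∃ a, Sum.inl a ∈ S := by
    obtain ⟨a | b, hx⟩ := hS
    exacts [⟨a, hx⟩, ⟨_, col b hx⟩]
  have hmaps : Set.MapsTo (alternation (φ c) (φ d)) {a | Sum.inl a ∈ S} {a | Sum.inl a ∈ S} :=
    fun a ha => col _ (row a ha).1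
  refine ⟨fun hcd => (row u hu).2.1 (by rw [hcd]), u, fun v hv => ?_⟩
  obtain ⟨m, rfl⟩ := hv.exists_nat_pow_eq
  exact (row _ (hmaps.perm_pow m hu)).2.2

end ExtendsColors

end Bichromatic

theorem isAcyclicEdgeColoring_iff_breaksOrbits [Finite α] [Finite β] {k : ℕ}
    {C : (completeBipartiteGraph α β).edgeSet → Fin k} {φ : Fin k → α ≃ β}
    (h : ExtendsColors (colorArray C) φ) :
    IsAcyclicEdgeColoring _ C ↔ BreaksOrbits (colorArray C) φ := by
  rw [isAcyclicEdgeColoring_iff_isAcyclic_bichromaticSubgraph]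
  constructor
  · intro hC c d hcd u
    by_contra! hu
    exact not_isAcyclic_bichromaticSubgraph hcd hu (hC c d)
  · intro hbreak c d
    by_contra hC
    obtain ⟨hcd, u, hu⟩ := h.exists_forall_sameCycle_of_not_isAcyclic hC
    obtain ⟨v, hv, hne⟩ := hbreak c d hcd u
    exact hne.elim (· (hu v hv).1) (· (hu v hv).2)

theorem exists_isAcyclicEdgeColoring_iff [Finite α] [Finite β]
    (hcard : Nat.card α = Nat.card β) {k : ℕ} :
    (∃ C : (completeBipartiteGraph α β).edgeSet → Fin k,
      IsProperEdgeColoring _ C ∧ IsAcyclicEdgeColoring _ C) ↔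
    ∃ (M : α → β → Fin k) (φ : Fin k → α ≃ β), ExtendsColors M φ ∧ BreaksOrbits M φ := by
  constructor
  · rintro ⟨C, hproper, hacyclic⟩
    obtain ⟨φ, hφ⟩ := (isProperEdgeColoring_iff_exists_extendsColors hcard).1 hproper
    exact ⟨colorArray C, φ, hφ, (isAcyclicEdgeColoring_iff_breaksOrbits hφ).1 hacyclic⟩
  · rintro ⟨M, φ, hφ, hM⟩
    obtain ⟨C, rfl⟩ := colorArray_surjective M
    exact ⟨C, (isProperEdgeColoring_iff_exists_extendsColors hcard).2 ⟨φ, hφ⟩,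
      (isAcyclicEdgeColoring_iff_breaksOrbits hφ).2 hM⟩

end MatchingSystem

section LowerBound

variable {α β κ : Type*}

theorem sign_of_isCycleOn [Fintype α] [DecidableEq α] {f : Equiv.Perm α} {s : Finset α}
    (hs : (s : Set α).Nontrivial) (hf : f.IsCycleOn s) (hfix : ∀ a ∉ s, f a = a) :
    Equiv.Perm.sign f = -(-1) ^ s.card := by
  have hcycle : f.IsCycle := Equiv.Perm.isCycle_iff_exists_isCycleOn.2
    ⟨s, hs, hf, fun a ha => by_contra fun has => ha (hfix a has)⟩
  have hsupport : f.support = s := by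
    ext a
    exact ⟨fun ha => by_contra fun has => Equiv.Perm.mem_support.1 ha (hfix a has),
      fun ha => Equiv.Perm.mem_support.2 (hf.apply_ne hs ha)⟩
  rw [hcycle.sign, hsupport]

theorem sign_eq_one_of_isCycleOn_univ [Fintype α] [DecidableEq α] [Nontrivial α]
    (hodd : Odd (Nat.card α)) {f : Equiv.Perm α} (hf : f.IsCycleOn Set.univ) :
    Equiv.Perm.sign f = 1 := by
  rw [sign_of_isCycleOn (s := Finset.univ) (by simpa using Set.nontrivial_univ) (by simpa using hf)
    (by simp), Finset.card_univ, ← Nat.card_eq_fintype_card, hodd.neg_one_pow, neg_neg]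

theorem sign_eq_neg_one_of_isCycleOn_compl_singleton [Fintype α] [DecidableEq α] [Nontrivial α]
    (hodd : Odd (Nat.card α)) {f : Equiv.Perm α} {a : α} (hf : f.IsCycleOn {a}ᶜ) :
    Equiv.Perm.sign f = -1 := by
  have hnontrivial : ({a}ᶜ : Set α).Nontrivial := by
    rw [← Set.one_lt_ncard_iff_nontrivial, Set.ncard_compl, Set.ncard_singleton]
    have := Finite.one_lt_card (α := α)
    grind
  have hfix : f a = a := by simpa using (hf.apply_mem_iff (x := a)).not
  rw [sign_of_isCycleOn (s := {a}ᶜ) (by simpa using hnontrivial) (by simpa using hf)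
    (by simpa using hfix), Finset.card_compl, Finset.card_singleton, ← Nat.card_eq_fintype_card,
    (hodd.tsub_odd odd_one).neg_one_pow]

theorem existsUnique_notMem_range [Finite κ] {f : α → κ} (hf : f.Injective)
    (hcard : Nat.card κ = Nat.card α + 1) : ∃! c, c ∉ Set.range f := by
  have hcompl : (Set.range f)ᶜ.ncard = 1 := by
    have := Set.ncard_add_ncard_compl (Set.range f)
    rw [Set.ncard_range_of_injective hf] at this
    omega
  obtain ⟨c, hc⟩ := Set.ncard_eq_one.1 hcompl
  exact ⟨c, hc.ge rfl, fun d hd => hc.le hd⟩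

theorem injective_of_subsingleton_compl_range [Finite α] [Finite κ] {f : α → κ}
    (hcard : Nat.card κ = Nat.card α + 1) (hf : (Set.range f)ᶜ.Subsingleton) : f.Injective := by
  have hle := Set.ncard_le_one_iff_subsingleton.2 hf
  have hadd := Set.ncard_add_ncard_compl (Set.range f)
  have himage : (f '' Set.univ).ncard ≤ (Set.univ : Set α).ncard := Set.ncard_image_le
  rw [Set.image_univ, Set.ncard_univ] at himage
  refine Set.injOn_univ.1 (Set.injOn_of_ncard_image_eq ?_)
  rw [Set.image_univ, Set.ncard_univ]
  omega

variable {M : α → β → κ} {φ : κ → α ≃ β}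

theorem ExtendsColors.mem_range_iff (h : ExtendsColors M φ) {a : α} {c : κ} :
    c ∈ Set.range (M a) ↔ M a (φ c a) = c :=
  ⟨fun ⟨_, hb⟩ => by rw [h.apply_eq hb, hb], fun hc => ⟨_, hc⟩⟩

namespace BreaksOrbits

theorem eq_of_forall_mem_range [Nonempty α] (hM : BreaksOrbits M φ)
    (h : ExtendsColors M φ) {c d : κ} (hc : ∀ a, c ∈ Set.range (M a))
    (hd : ∀ a, d ∈ Set.range (M a)) : c = d := by
  by_contra hcd
  obtain ⟨v, -, hv⟩ := hM c d hcd (Classical.arbitrary α)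
  exact hv.elim (· (h.mem_range_iff.1 (hc v))) (· (h.mem_range_iff.1 (hd v)))

theorem exists_injective_mem_range_iff_ne [Finite α] [Nonempty α] [Finite κ]
    (hM : BreaksOrbits M φ) (h : ExtendsColors M φ) (hβ : Nat.card β = Nat.card α)
    (hcard : Nat.card κ = Nat.card α + 1) :
    ∃ μ : α → κ, μ.Injective ∧ ∀ a c, c ∈ Set.range (M a) ↔ c ≠ μ a := by
  choose μ hμ hunique using fun a => existsUnique_notMem_range (h.injective_row a) (hβ ▸ hcard)
  have hmem : ∀ a c, c ∈ Set.range (M a) ↔ c ≠ μ a := fun a c =>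
    ⟨fun hc hca => hμ a (hca ▸ hc), fun hc => by_contra fun hcM => hc (hunique a c hcM)⟩
  refine ⟨μ, injective_of_subsingleton_compl_range hcard fun c hc d hd => ?_, hmem⟩
  exact hM.eq_of_forall_mem_range h (fun a => (hmem a c).2 fun hca => hc ⟨a, hca.symm⟩)
    (fun a => (hmem a d).2 fun hda => hd ⟨a, hda.symm⟩)

variable {μ : α → κ}

theorem isCycleOn_univ_of_notMem_range (hM : BreaksOrbits M φ) (h : ExtendsColors M φ)
    (hμ : μ.Injective) (hrange : ∀ a c, c ∈ Set.range (M a) ↔ c ≠ μ a) {p : κ}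
    (hp : p ∉ Set.range μ) (a : α) :
    (alternation (φ p) (φ (μ a))).IsCycleOn Set.univ := by
  have hsame : ∀ u, (alternation (φ p) (φ (μ a))).SameCycle u a := by
    intro u
    obtain ⟨v, huv, hv⟩ := hM p (μ a) (fun hpa => hp ⟨a, hpa.symm⟩) u
    rw [Ne, Ne, ← h.mem_range_iff, ← h.mem_range_iff, hrange, hrange, not_not, not_not] at hv
    rcases hv with hv | hv
    · exact (hp ⟨v, hv.symm⟩).elim
    · rwa [← hμ hv] at huv
  exact ⟨Set.bijOn_univ.2 (Equiv.bijective _), fun u _ v _ => (hsame u).trans (hsame v).symm⟩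

theorem isCycleOn_compl_singleton_of_apply_eq (hM : BreaksOrbits M φ) (h : ExtendsColors M φ)
    (hμ : μ.Injective) (hrange : ∀ a c, c ∈ Set.range (M a) ↔ c ≠ μ a) {a a' : α} (hne : a ≠ a')
    (hφ : φ (μ a) a = φ (μ a') a) :
    (alternation (φ (μ a)) (φ (μ a'))).IsCycleOn {a}ᶜ := by
  set ρ := alternation (φ (μ a)) (φ (μ a'))
  have hfix : ρ a = a := alternation_apply_eq_self_iff.2 hφ
  have hsame : ∀ u ≠ a, ρ.SameCycle u a' := by
    intro u hu
    obtain ⟨v, huv, hv⟩ := hM (μ a) (μ a') (hμ.ne hne) u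
    rw [Ne, Ne, ← h.mem_range_iff, ← h.mem_range_iff, hrange, hrange, not_not, not_not] at hv
    rcases hv with hv | hv
    · obtain rfl := hμ hv
      exact (hu (huv.eq_of_right hfix)).elim
    · rwa [hμ hv]
  refine ⟨ρ.bijOn fun u => ?_, fun u hu v hv => (hsame u hu).trans (hsame v hv).symm⟩
  simp only [Set.mem_compl_singleton_iff, ne_eq]
  rw [← ρ.injective.eq_iff (a := u), hfix]

/-- Let `n` be the number of rows, `μ a` the color missing in row `a` and `p` the only color missing
nowhere. Every `(φ (μ a))⁻¹ * φ p` is an `n`-cycle, hence even. If the color of the cell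
`(a, φ (μ a) a)` is `μ a'`, then the permutations of this form for `a` and `a'` differ by a cycle of
length `n - 1`, which is odd. -/
theorem card_ne_card_add_one [Finite α] [Nontrivial α] [Finite κ] (hodd : Odd (Nat.card α))
    (hM : BreaksOrbits M φ) (h : ExtendsColors M φ) (hβ : Nat.card β = Nat.card α) :
    Nat.card κ ≠ Nat.card α + 1 := by
  classical
  intro hcard
  have := Fintype.ofFinite α
  obtain ⟨μ, hμ, hrange⟩ := hM.exists_injective_mem_range_iff_ne h hβ hcard
  obtain ⟨p, hp, hunique⟩ := existsUnique_notMem_range hμ hcard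
  have hcycle := hM.isCycleOn_univ_of_notMem_range h hμ hrange hp
  have hsign : ∀ a, Equiv.Perm.sign (alternation (φ p) (φ (μ a))) = 1 := fun a =>
    sign_eq_one_of_isCycleOn_univ hodd (hcycle a)
  let a := Classical.arbitrary α
  set e := M a (φ (μ a) a)
  have hea : e ≠ μ a := (hrange a e).1 ⟨_, rfl⟩
  have hφ : φ e a = φ (μ a) a := h a _
  by_cases hep : e = p
  · exact (hcycle a).apply_ne Set.nontrivial_univ (Set.mem_univ a)
      (alternation_apply_eq_self_iff.2 (hep ▸ hφ))
  obtain ⟨a', ha'⟩ : e ∈ Set.range μ := by_contra fun hmem => hep (hunique e hmem)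
  rw [← ha'] at hφ hea
  have hne : a ≠ a' := fun haa => hea (haa ▸ rfl)
  have hsign_odd : Equiv.Perm.sign (alternation (φ (μ a)) (φ (μ a'))) = -1 :=
    sign_eq_neg_one_of_isCycleOn_compl_singleton hodd
      (hM.isCycleOn_compl_singleton_of_apply_eq h hμ hrange hne hφ.symm)
  have hmul := congrArg Equiv.Perm.sign
    (alternation_mul_alternation (φ p) (φ (μ a)) (φ (μ a')))
  rw [map_mul, hsign, hsign, hsign_odd] at hmul
  exact absurd hmul (by decide)

theorem card_add_two_le [Finite α] [Nontrivial α] [Finite κ] (hodd : Odd (Nat.card α))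
    (hM : BreaksOrbits M φ) (h : ExtendsColors M φ) (hβ : Nat.card β = Nat.card α) :
    Nat.card α + 2 ≤ Nat.card κ := by
  have hone := Finite.one_lt_card (α := α)
  have hrow := h.injective_row
  have hle : Nat.card β ≤ Nat.card κ :=
    Nat.card_le_card_of_injective _ (hrow (Classical.arbitrary α))
  have hne : Nat.card κ ≠ Nat.card α := by
    intro hcard
    have : Finite β := Nat.finite_of_card_ne_zero (by omega)
    have hsurj : ∀ a, (M a).Surjective := fun a =>
      ((Nat.bijective_iff_injective_and_card _).2 ⟨hrow a, hβ.trans hcard.symm⟩).2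
    have : Subsingleton κ :=
      ⟨fun c d => hM.eq_of_forall_mem_range h (fun a => hsurj a c) (fun a => hsurj a d)⟩
    have := Finite.card_le_one_iff_subsingleton.2 this
    omega
  have hne' := hM.card_ne_card_add_one hodd h hβ
  omega

end BreaksOrbits

end LowerBound

section UpperBound

variable {α β ι : Type*}

theorem orbit_coe_perm [Finite α] (f : Equiv.Perm α) (u : α) :
    orbit f u = {v | f.SameCycle u v} := by
  ext v
  simp only [orbit, Set.mem_ofPred_eq, Equiv.Perm.iterate_eq_pow]
  exact ⟨fun ⟨k, hk⟩ => ⟨k, by simpa using hk⟩, Equiv.Perm.SameCycle.exists_nat_pow_eq⟩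

theorem two_le_ncard_orbit [Finite α] {f : α → α} {u : α} (hu : f u ≠ u) :
    2 ≤ (orbit f u).ncard :=
  Set.one_lt_ncard_iff_nontrivial.2 ⟨f u, ⟨1, rfl⟩, u, ⟨0, rfl⟩, hu⟩

theorem bijective_apply_of_isCycleOn [Finite β] [Nontrivial α] {σ : ι → α ≃ β}
    (hcard : Nat.card ι = Nat.card β)
    (hσ : ∀ i j, i ≠ j → (alternation (σ i) (σ j)).IsCycleOn Set.univ) (a : α) :
    (fun i => σ i a).Bijective := by
  refine (Nat.bijective_iff_injective_and_card _).2 ⟨fun i j hij => ?_, hcard⟩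
  by_contra hne
  exact (hσ i j hne).apply_ne Set.nontrivial_univ (Set.mem_univ a)
    (alternation_apply_eq_self_iff.2 hij)

section SplitArray

variable {σ : ι → α ≃ β} (hσ : ∀ a, (fun i => σ i a).Bijective) (τ : α ≃ β) (I : Set α)

open Classical in
/-- The array obtained by coloring each cell with the unique matching `σ i` through it, and then
recoloring the matching `τ` with two new colors according to whether the row lies in `I`. The two
new colors are the truth values of that condition. -/
noncomputable def splitArray (a : α) (b : β) : ι ⊕ Prop :=
  if τ a = b then Sum.inr (a ∈ I) else Sum.inl ((Equiv.ofBijective _ (hσ a)).symm b)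

theorem splitArray_apply_right (a : α) : splitArray hσ τ I a (τ a) = Sum.inr (a ∈ I) :=
  if_pos rfl

theorem splitArray_apply_left_ne_iff {i : ι} {a : α} :
    splitArray hσ τ I a (σ i a) ≠ Sum.inl i ↔ σ i a = τ a := by
  have hsymm : (Equiv.ofBijective _ (hσ a)).symm (σ i a) = i :=
    (Equiv.ofBijective _ (hσ a)).symm_apply_apply i
  simp [splitArray, hsymm, eq_comm]

theorem extendsColors_splitArray :
    ExtendsColors (splitArray hσ τ I) (Sum.elim σ fun _ => τ) := by
  intro a b
  by_cases hb : τ a = b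
  · simp [splitArray, hb]
  · rw [splitArray, if_neg hb]
    exact (Equiv.ofBijective _ (hσ a)).apply_symm_apply b

variable {τ I}

theorem breaksOrbits_splitArray
    (hcycle : ∀ i j, i ≠ j → (alternation (σ i) (σ j)).IsCycleOn Set.univ)
    (hfix : ∀ i, ∃ u, σ i u = τ u)
    (hI : ∀ i u, σ i u ≠ τ u → (∃ v ∈ I, (alternation (σ i) τ).SameCycle u v) ∧
      ∃ v ∉ I, (alternation (σ i) τ).SameCycle u v) :
    BreaksOrbits (splitArray hσ τ I) (Sum.elim σ fun _ => τ) := by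
  have left_right : ∀ i x u, ∃ v, (alternation (σ i) τ).SameCycle u v ∧
      (splitArray hσ τ I v (σ i v) ≠ Sum.inl i ∨ splitArray hσ τ I v (τ v) ≠ Sum.inr x) := by
    intro i x u
    simp only [splitArray_apply_left_ne_iff, splitArray_apply_right, Ne, Sum.inr.injEq]
    by_cases hu : σ i u = τ u
    · exact ⟨u, .refl _ _, Or.inl hu⟩
    · obtain ⟨⟨v, hv, huv⟩, w, hw, huw⟩ := hI i u hu
      by_cases hx : x
      · exact ⟨w, huw, Or.inr (by simpa [hx] using hw)⟩
      · exact ⟨v, huv, Or.inr (by simpa [hx] using hv)⟩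
  rintro (i | x) (j | y) hne u
  · obtain ⟨v, hv⟩ := hfix i
    exact ⟨v, (hcycle i j (fun h => hne (congrArg _ h))).2 (Set.mem_univ u) (Set.mem_univ v),
      Or.inl ((splitArray_apply_left_ne_iff hσ τ I).2 hv)⟩
  · exact left_right i y u
  · obtain ⟨v, huv, hv⟩ := left_right j x u
    rw [← alternation_inv, Equiv.Perm.sameCycle_inv] at huv
    exact ⟨v, huv, hv.symm⟩
  · refine ⟨u, .refl _ _, ?_⟩
    simp only [Sum.elim_inr, splitArray_apply_right]
    grind

end SplitArray

end UpperBound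

section CompleteBipartite

variable {α β : Type*}

theorem card_add_two_le_of_isAcyclicEdgeColoring [Finite α] [Nontrivial α]
    (hodd : Odd (Nat.card α)) (hcard : Nat.card α = Nat.card β) {k : ℕ}
    {C : (completeBipartiteGraph α β).edgeSet → Fin k} (hproper : IsProperEdgeColoring _ C)
    (hacyclic : IsAcyclicEdgeColoring _ C) : Nat.card α + 2 ≤ k := by
  have : Finite β := Nat.finite_of_card_ne_zero (hcard ▸ Nat.card_pos.ne')
  obtain ⟨M, φ, hφ, hM⟩ := (exists_isAcyclicEdgeColoring_iff hcard).1 ⟨C, hproper, hacyclic⟩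
  simpa using hM.card_add_two_le hodd hφ hcard.symm

theorem exists_isAcyclicEdgeColoring_of_isCycleOn [Finite α] [Nontrivial α] {ι : Type*}
    (hι : Nat.card ι = Nat.card α) {σ : ι → α ≃ β} {τ : α ≃ β} {I : Set α}
    (hcycle : ∀ i j, i ≠ j → (alternation (σ i) (σ j)).IsCycleOn Set.univ)
    (hfix : ∀ i, ∃ u, σ i u = τ u)
    (hI : ∀ i u, σ i u ≠ τ u → (∃ v ∈ I, (alternation (σ i) τ).SameCycle u v) ∧
      ∃ v ∉ I, (alternation (σ i) τ).SameCycle u v) :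
    ∃ C : (completeBipartiteGraph α β).edgeSet → Fin (Nat.card α + 2),
      IsProperEdgeColoring _ C ∧ IsAcyclicEdgeColoring _ C := by
  have : Finite β := Finite.of_equiv α τ
  have : Finite ι := Nat.finite_of_card_ne_zero (hι ▸ Nat.card_pos.ne')
  have hcard : Nat.card α = Nat.card β := Nat.card_congr τ
  have hσ := bijective_apply_of_isCycleOn (hι.trans hcard) hcycle
  let e : ι ⊕ Prop ≃ Fin (Nat.card α + 2) := Finite.equivFinOfCardEq (by simp [Nat.card_sum, hι])
  exact (exists_isAcyclicEdgeColoring_iff hcard).2 ⟨_, _,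
    (extendsColors_splitArray hσ τ I).comp_equiv e,
    (breaksOrbits_splitArray hσ hcycle hfix hI).comp_equiv e⟩

end CompleteBipartite

theorem isCycleOn_univ_of_support_eq_univ {α : Type*} [Fintype α] [DecidableEq α]
    {f : Equiv.Perm α} (hf : f.IsCycle) (hsupport : f.support = Finset.univ) :
    f.IsCycleOn Set.univ := by
  simpa [← Equiv.Perm.mem_support, hsupport] using hf.isCycleOn

theorem stmt7_general {α β ι : Type*} {n : ℕ} (hn : 1 < n) (hodd : Odd n)
    (hα : Nat.card α = n) (hι : Nat.card ι = n) (σ : ι → α ≃ β) (τ : α ≃ β)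
    (hcycle : ∀ i j, i ≠ j → (alternation (σ i) (σ j)).IsCycleOn Set.univ)
    (hfix : ∀ i, ∃ u, alternation (σ i) τ u = u) {I₁ I₂ : Set α} (hI : Disjoint I₁ I₂)
    (horbit : ∀ i u, 2 ≤ (orbit (alternation (σ i) τ) u).ncard →
      (orbit (alternation (σ i) τ) u ∩ I₁).Nonempty ∧
      (orbit (alternation (σ i) τ) u ∩ I₂).Nonempty) :
    (∃ C : (completeBipartiteGraph α β).edgeSet → Fin (n + 2),
      IsProperEdgeColoring _ C ∧ IsAcyclicEdgeColoring _ C) ∧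
    acyclicChromaticIndex (completeBipartiteGraph α β) = n + 2 := by
  subst hα
  have : Finite α := Nat.finite_of_card_ne_zero (by omega)
  have : Nontrivial α := Finite.one_lt_card_iff_nontrivial.1 hn
  have hsplit : ∀ i u, σ i u ≠ τ u → (∃ v ∈ I₁, (alternation (σ i) τ).SameCycle u v) ∧
      ∃ v ∉ I₁, (alternation (σ i) τ).SameCycle u v := by
    intro i u hu
    obtain ⟨⟨v, huv, hv⟩, w, huw, hw⟩ :=
      horbit i u (two_le_ncard_orbit (alternation_apply_eq_self_iff.not.2 hu))
    rw [orbit_coe_perm] at huv huw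
    exact ⟨⟨v, hv, huv⟩, w, hI.notMem_of_mem_right hw, huw⟩
  obtain ⟨C, hC⟩ := exists_isAcyclicEdgeColoring_of_isCycleOn hι hcycle
    (fun i => (hfix i).imp fun _ => alternation_apply_eq_self_iff.1) hsplit
  exact ⟨⟨C, hC⟩, le_antisymm (Nat.sInf_le ⟨C, hC⟩) <| le_csInf ⟨_, C, hC⟩
    fun _ ⟨_, hproper, hacyclic⟩ =>
      card_add_two_le_of_isAcyclicEdgeColoring hodd (Nat.card_congr τ) hproper hacyclic⟩

/-- The general framework: let `n ≥ 3` be odd, let `π₀, …, π_{n-1}` and `π` be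
permutations of `Fin n` such that (i) each `πᵢ⁻¹ ∘ πⱼ` (`i ≠ j`) is an `n`-cycle,
(ii) each `π⁻¹ ∘ πᵢ` has exactly one fixed point, and (iii) `Fin n` is partitioned
into `I₁ ⊔ I₂` meeting every orbit of size `≥ 2` of every `π⁻¹ ∘ πᵢ`.  Then
`K_{n,n}` admits an acyclic proper edge coloring with `n + 2` colors, and
consequently `a'(K_{n,n}) = n + 2`. -/
theorem stmt7 (n : ℕ) (hn : 3 ≤ n) (hodd : Odd n)
    (πs : Fin n → Equiv.Perm (Fin n)) (πM : Equiv.Perm (Fin n))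
    (h1 : ∀ i j : Fin n, i ≠ j →
      ((πs i)⁻¹ * πs j).IsCycle ∧ ((πs i)⁻¹ * πs j).support = Finset.univ)
    (h2 : ∀ i : Fin n, ∃! u : Fin n, (πM⁻¹ * πs i) u = u)
    (h3 : ∃ I₁ I₂ : Set (Fin n), Disjoint I₁ I₂ ∧ I₁ ∪ I₂ = Set.univ ∧
      ∀ (i : Fin n) (u : Fin n),
        2 ≤ (orbit (⇑(πM⁻¹ * πs i)) u).ncard →
          ((orbit (⇑(πM⁻¹ * πs i)) u) ∩ I₁).Nonempty ∧
          ((orbit (⇑(πM⁻¹ * πs i)) u) ∩ I₂).Nonempty) :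
    (∃ C : (completeBipartiteGraph (Fin n) (Fin n)).edgeSet → Fin (n + 2),
      IsProperEdgeColoring (completeBipartiteGraph (Fin n) (Fin n)) C ∧
      IsAcyclicEdgeColoring (completeBipartiteGraph (Fin n) (Fin n)) C) ∧
    acyclicChromaticIndex (completeBipartiteGraph (Fin n) (Fin n)) = n + 2 := by
  obtain ⟨I₁, I₂, hI, -, horbit⟩ := h3
  exact stmt7_general (by omega) hodd (Nat.card_fin n) (Nat.card_fin n) πs πM
    (fun i j hij => isCycleOn_univ_of_support_eq_univ (h1 j i hij.symm).1 (h1 j i hij.symm).2)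
    (fun i => (h2 i).exists) hI horbit
end

section
/- Let p ≥ 5 be an odd prime. For every (a,b) ∈ ZMod p × ZMod p, every orbit of size at least 2 of the permutation π⁻¹ ∘ π_{(a,b)} of ZMod p × ZMod p contains at least one element of 𝓘⁽²⁾ and at least one element of 𝓘⁽¹⁾. -/
/-- The map `π_{(a,b)}` on `ZMod p × ZMod p` (with `x` a fixed primitive root mod `p`). -/
def piab {p : ℕ} (x a b : ZMod p) : ZMod p × ZMod p → ZMod p × ZMod p :=
  fun cd =>
    if cd.1 = 0 then
      if a + b + cd.2 ≠ 0 then (a, a + b + cd.2) else (a + x * b, 0)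
    else
      if b + cd.2 = 0 then (a + cd.1 + x * b, 0) else (a + cd.1, b + cd.2)

/-- The composite `π⁻¹ ∘ π_{(a,b)}`, where `π(c,d) = (x⁻¹·c, x·d)`,
so `π⁻¹(c,d) = (x·c, x⁻¹·d)`. -/
def piInvPiab {p : ℕ} (x a b : ZMod p) : ZMod p × ZMod p → ZMod p × ZMod p :=
  fun cd => (x * (piab x a b cd).1, x⁻¹ * (piab x a b cd).2)

/-- The set `𝓘⁽²⁾ = {(0,1), (1,0)} ∪ {(z,z) : z ≠ 0} ∪ {(z, z·x) : z ≠ 0}`. -/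
def I2 (p : ℕ) (x : ZMod p) : Set (ZMod p × ZMod p) :=
  {q | q = (0, 1) ∨ q = (1, 0) ∨ (q.1 ≠ 0 ∧ q.2 = q.1) ∨ (q.1 ≠ 0 ∧ q.2 = q.1 * x)}

/-!
Write `f` for the affine map `(c, d) ↦ (x * (a + c), x⁻¹ * (b + d))`, with fixed point `o`. Then
`π⁻¹ ∘ π_{(a,b)} = f ∘ R ∘ C`, where `C` adds `a` to the second coordinate along the column
`c = 0` and `R` adds `x * b` to the first coordinate along the row `d = -b`. The map `f` preserves
`κ = (c - o.1) * (d - o.2)`, and as `x` is a primitive root each hyperbola `κ = const ≠ 0` is a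
single `f`-orbit, while the level set `κ = 0` consists of the fixed point and of two orbits, the
punctured axes through `o`. If `a, b ≠ 0`, then neither the column nor the row is an axis and each
hyperbola meets both of them once, so an orbit of `f ∘ R ∘ C` runs along an arc of a hyperbola to
the column, where it hops to another hyperbola, then along an arc of that one to the row, where it
hops again, and so on. Two consecutive hops change `κ` by a constant which is nonzero because `x` is
not a square, so the orbit ends up running through a whole axis. If only one of `a`, `b` is nonzero,
the orbit either is an axis or covers the complement of an axis; if both vanish, it is a hyperbola
or an axis.
-/

section Orbit

variable {α β : Type*} {f g : α → α} {u v w : α}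

theorem self_mem_orbit : u ∈ orbit f u := ⟨0, rfl⟩

theorem apply_mem_orbit : f u ∈ orbit f u := ⟨1, rfl⟩

theorem orbit_subset_orbit (hv : v ∈ orbit f u) : orbit f v ⊆ orbit f u := by
  obtain ⟨k, rfl⟩ := hv
  rintro _ ⟨l, rfl⟩
  exact ⟨l + k, Function.iterate_add_apply f l k u⟩

theorem orbit_eq_singleton (h : f u = u) : orbit f u = {u} :=
  Set.Subset.antisymm (by rintro _ ⟨k, rfl⟩; exact Function.iterate_fixed h k)
    (Set.singleton_subset_iff.2 self_mem_orbit)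

theorem map_mem_orbit_of_semiconj {φ : α → β} {f' : β → β} (h : Function.Semiconj φ f f')
    (hv : v ∈ orbit f u) : φ v ∈ orbit f' (φ u) := by
  obtain ⟨k, rfl⟩ := hv
  exact ⟨k, (h.iterate_right k u).symm⟩

theorem exists_mem_orbit_of_eqOn_diff {S : Set α} (h : Set.EqOn g f (orbit f u \ S))
    (hS : ∃ w ∈ orbit f u, w ∈ S) : ∃ w ∈ orbit g u, w ∈ S := by
  classical
  have hex : ∃ k, f^[k] u ∈ S := by
    obtain ⟨_, ⟨k, rfl⟩, hk⟩ := hS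
    exact ⟨k, hk⟩
  have iterate_eq : ∀ k ≤ Nat.find hex, g^[k] u = f^[k] u := by
    intro k hk
    induction k with
    | zero => rfl
    | succ k ih =>
      rw [Function.iterate_succ_apply', Function.iterate_succ_apply', ih (by omega)]
      exact h ⟨⟨k, rfl⟩, Nat.find_min hex hk⟩
  exact ⟨_, ⟨_, iterate_eq _ le_rfl⟩, Nat.find_spec hex⟩

theorem orbit_subset_orbit_of_eqOn (h : Set.EqOn g f (orbit f u)) : orbit f u ⊆ orbit g u := by
  intro w hw
  obtain ⟨_, hmem, rfl⟩ := exists_mem_orbit_of_eqOn_diff (S := {w}) (h.mono Set.sdiff_subset)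
    ⟨w, hw, rfl⟩
  exact hmem

theorem mem_orbit_apply_of_eqOn (hw : w ∈ orbit f (f v))
    (h : Set.EqOn g f (orbit f (f v) \ {v, w})) : w ∈ orbit g (f v) := by
  classical
  set n := Nat.find hw
  have hnw : f^[n] (f v) = w := Nat.find_spec hw
  -- A return to `v` before time `n` could be cut out, giving an earlier visit to `w`.
  have iterate_ne : ∀ k < n, f^[k] (f v) ≠ v := by
    intro k hk hkv
    refine Nat.find_min hw (m := n - (k + 1)) (by omega) ?_
    rw [← hnw, show n = n - (k + 1) + (k + 1) by omega, Function.iterate_add_apply,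
      Function.iterate_succ_apply', hkv, Nat.add_sub_cancel]
  have iterate_eq : ∀ k ≤ n, g^[k] (f v) = f^[k] (f v) := by
    intro k hk
    induction k with
    | zero => rfl
    | succ k ih =>
      rw [Function.iterate_succ_apply', Function.iterate_succ_apply', ih (by omega)]
      refine h ⟨⟨k, rfl⟩, ?_⟩
      rintro (hv | hw')
      · exact iterate_ne k hk hv
      · exact Nat.find_min hw hk hw'
  exact ⟨n, (iterate_eq n le_rfl).trans hnw⟩

end Orbit

section PrimitiveRoot

variable {K : Type*} [Field K] {x : K}

theorem ne_zero_of_forall_exists_pow_eq (hK : ringChar K ≠ 2)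
    (hx : ∀ z : K, z ≠ 0 → ∃ k : ℕ, x ^ k = z) : x ≠ 0 := by
  rintro rfl
  obtain ⟨k, hk⟩ := hx (-1) (neg_ne_zero.2 one_ne_zero)
  have hk0 : k ≠ 0 := by
    rintro rfl
    exact Ring.neg_one_ne_one_of_char_ne_two hK (hk.symm.trans (pow_zero 0))
  exact neg_ne_zero.2 one_ne_zero (hk.symm.trans (zero_pow hk0))

variable [Fintype K]

theorem isPrimitiveRoot_of_forall_exists_pow_eq (hx0 : x ≠ 0)
    (hx : ∀ z : K, z ≠ 0 → ∃ k : ℕ, x ^ k = z) : IsPrimitiveRoot x (Fintype.card K - 1) := by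
  have hgen : ∀ z : Kˣ, z ∈ Submonoid.powers (Units.mk0 x hx0) := fun z ↦ by
    obtain ⟨k, hk⟩ := hx z z.ne_zero
    exact ⟨k, Units.ext (by simpa using hk)⟩
  have horder : orderOf x = Fintype.card K - 1 := by
    rw [← Nat.card_eq_fintype_card, ← Nat.card_units, ← orderOf_eq_card_of_forall_mem_powers hgen,
      ← orderOf_units, Units.val_mk0]
  exact horder ▸ IsPrimitiveRoot.orderOf x

variable (hx : IsPrimitiveRoot x (Fintype.card K - 1))
include hx

theorem primitiveRoot_ne_zero : x ≠ 0 :=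
  hx.ne_zero (Nat.sub_ne_zero_of_lt Fintype.one_lt_card)

theorem primitiveRoot_ne_one (hK : 2 < Fintype.card K) : x ≠ 1 :=
  hx.ne_one (by omega)

theorem exists_primitiveRoot_pow_eq {z : K} (hz : z ≠ 0) : ∃ k : ℕ, x ^ k = z := by
  have : NeZero (Fintype.card K - 1) := ⟨Nat.sub_ne_zero_of_lt Fintype.one_lt_card⟩
  obtain ⟨k, -, hk⟩ := hx.eq_pow_of_pow_eq_one (FiniteField.pow_card_sub_one_eq_one z hz)
  exact ⟨k, hk⟩

theorem exists_sq_eq_or_mul_sq_eq {z : K} (hz : z ≠ 0) :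
    ∃ t ≠ 0, t ^ 2 = z ∨ x * t ^ 2 = z := by
  obtain ⟨k, rfl⟩ := exists_primitiveRoot_pow_eq hx hz
  obtain ⟨m, rfl | rfl⟩ := Nat.even_or_odd' k
  · exact ⟨x ^ m, pow_ne_zero m (primitiveRoot_ne_zero hx), Or.inl (by ring)⟩
  · exact ⟨x ^ m, pow_ne_zero m (primitiveRoot_ne_zero hx), Or.inr (by ring)⟩

theorem not_isSquare_primitiveRoot (hK : ringChar K ≠ 2) : ¬IsSquare x := by
  rintro ⟨r, hr⟩
  obtain ⟨z, hz⟩ := FiniteField.exists_nonsquare hK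
  obtain ⟨k, rfl⟩ := exists_primitiveRoot_pow_eq hx (z := z) (by rintro rfl; exact hz .zero)
  exact hz ⟨r ^ k, by rw [hr, mul_pow]⟩

theorem sq_ne_primitiveRoot_pow_three_mul_sq (hK : ringChar K ≠ 2) {c d : K} (hd : d ≠ 0) :
    c ^ 2 ≠ x ^ 3 * d ^ 2 := by
  have hx0 := primitiveRoot_ne_zero hx
  refine fun h ↦ not_isSquare_primitiveRoot hx hK ⟨c / (x * d), ?_⟩
  field_simp
  linear_combination -h

end PrimitiveRoot

section HyperbolicRotation

variable {K : Type*} [Field K]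

/-- The affine map with fixed point `o` and linear part `diag(x, x⁻¹)`. It preserves the hyperbolas
`(c - o.1) * (d - o.2) = const`. -/
def hyperbolicRotation (x : K) (o v : K × K) : K × K :=
  (o.1 + x * (v.1 - o.1), o.2 + x⁻¹ * (v.2 - o.2))

variable {x : K} {o u v w : K × K}

theorem hyperbolicRotation_self : hyperbolicRotation x o o = o := by
  simp [hyperbolicRotation]

theorem swap_hyperbolicRotation :
    (hyperbolicRotation x o v).swap = hyperbolicRotation x⁻¹ o.swap v.swap := by
  simp [hyperbolicRotation]

theorem iterate_hyperbolicRotation (k : ℕ) :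
    (hyperbolicRotation x o)^[k] v = hyperbolicRotation (x ^ k) o v := by
  induction k with
  | zero => simp [hyperbolicRotation]
  | succ k ih =>
    rw [Function.iterate_succ_apply', ih]
    ext <;> simp [hyperbolicRotation, pow_succ] <;> ring

variable [Fintype K] (hx : IsPrimitiveRoot x (Fintype.card K - 1))
include hx

theorem mem_orbit_hyperbolicRotation :
    w ∈ orbit (hyperbolicRotation x o) v ↔ ∃ t ≠ 0, hyperbolicRotation t o v = w := by
  constructor
  · rintro ⟨k, rfl⟩
    exact ⟨x ^ k, pow_ne_zero k (primitiveRoot_ne_zero hx), (iterate_hyperbolicRotation k).symm⟩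
  · rintro ⟨t, ht, rfl⟩
    obtain ⟨k, rfl⟩ := exists_primitiveRoot_pow_eq hx ht
    exact ⟨k, iterate_hyperbolicRotation k⟩

theorem mem_orbit_hyperbolicRotation_apply (hw : w ∈ orbit (hyperbolicRotation x o) v) :
    w ∈ orbit (hyperbolicRotation x o) (hyperbolicRotation x o v) := by
  have hx0 := primitiveRoot_ne_zero hx
  obtain ⟨t, ht, rfl⟩ := (mem_orbit_hyperbolicRotation hx).1 hw
  refine (mem_orbit_hyperbolicRotation hx).2 ⟨t / x, div_ne_zero ht hx0, ?_⟩
  ext <;> simp only [hyperbolicRotation] <;> field_simp <;> ring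

theorem mem_orbit_hyperbolicRotation_of_fst_ne (hv : v.1 ≠ o.1) (hw : w.1 ≠ o.1)
    (h : (w.1 - o.1) * (w.2 - o.2) = (v.1 - o.1) * (v.2 - o.2)) :
    w ∈ orbit (hyperbolicRotation x o) v := by
  have hv' := sub_ne_zero.2 hv
  have hw' := sub_ne_zero.2 hw
  refine (mem_orbit_hyperbolicRotation hx).2
    ⟨(w.1 - o.1) / (v.1 - o.1), div_ne_zero hw' hv', Prod.ext ?_ ?_⟩
  · simp only [hyperbolicRotation]
    field_simp
    ring
  · simp only [hyperbolicRotation]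
    field_simp
    linear_combination -h

theorem exists_fst_eq_mem_orbit_hyperbolicRotation {c : K} (hc : c ≠ o.1) (hv : v.1 ≠ o.1) :
    ∃ d, (c, d) ∈ orbit (hyperbolicRotation x o) v := by
  have hc' := sub_ne_zero.2 hc
  exact ⟨o.2 + (v.1 - o.1) * (v.2 - o.2) / (c - o.1),
    mem_orbit_hyperbolicRotation_of_fst_ne hx hv hc (by field_simp; ring)⟩

theorem mem_orbit_hyperbolicRotation_of_snd_ne (hv : v.2 ≠ o.2) (hw : w.2 ≠ o.2)
    (h : (w.1 - o.1) * (w.2 - o.2) = (v.1 - o.1) * (v.2 - o.2)) :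
    w ∈ orbit (hyperbolicRotation x o) v := by
  have hswap : Function.Semiconj Prod.swap (hyperbolicRotation x⁻¹ o.swap)
      (hyperbolicRotation x o) := fun v ↦ by
    simpa using swap_hyperbolicRotation (x := x⁻¹) (o := o.swap) (v := v)
  exact map_mem_orbit_of_semiconj hswap <|
    mem_orbit_hyperbolicRotation_of_fst_ne (v := v.swap) (w := w.swap) hx.inv hv hw
      (by simpa [mul_comm] using h)

theorem eq_of_mem_orbit_hyperbolicRotation_of_fst_eq
    (hu : u ∈ orbit (hyperbolicRotation x o) v) (hw : w ∈ orbit (hyperbolicRotation x o) v)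
    (huw : u.1 = w.1) (hv : v.1 ≠ o.1) : u = w := by
  obtain ⟨s, -, rfl⟩ := (mem_orbit_hyperbolicRotation hx).1 hu
  obtain ⟨t, -, rfl⟩ := (mem_orbit_hyperbolicRotation hx).1 hw
  have hst : s = t := mul_right_cancel₀ (sub_ne_zero.2 hv) (add_left_cancel huw)
  rw [hst]

theorem eq_of_mem_orbit_hyperbolicRotation_of_snd_eq
    (hu : u ∈ orbit (hyperbolicRotation x o) v) (hw : w ∈ orbit (hyperbolicRotation x o) v)
    (huw : u.2 = w.2) (hv : v.2 ≠ o.2) : u = w := by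
  obtain ⟨s, -, rfl⟩ := (mem_orbit_hyperbolicRotation hx).1 hu
  obtain ⟨t, -, rfl⟩ := (mem_orbit_hyperbolicRotation hx).1 hw
  have hst : s = t :=
    inv_injective (mul_right_cancel₀ (sub_ne_zero.2 hv) (add_left_cancel huw))
  rw [hst]

theorem fst_eq_iff_of_mem_orbit_hyperbolicRotation
    (hw : w ∈ orbit (hyperbolicRotation x o) v) : w.1 = o.1 ↔ v.1 = o.1 := by
  obtain ⟨t, ht, rfl⟩ := (mem_orbit_hyperbolicRotation hx).1 hw
  simp [hyperbolicRotation, ht, sub_eq_zero]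

theorem snd_eq_iff_of_mem_orbit_hyperbolicRotation
    (hw : w ∈ orbit (hyperbolicRotation x o) v) : w.2 = o.2 ↔ v.2 = o.2 := by
  obtain ⟨t, ht, rfl⟩ := (mem_orbit_hyperbolicRotation hx).1 hw
  simp [hyperbolicRotation, ht, sub_eq_zero]

end HyperbolicRotation

section PuncturedLines

variable {K : Type*}

/-- The horizontal line through `o`, without `o`. -/
def puncturedRow (o : K × K) : Set (K × K) := {v | v.1 ≠ o.1 ∧ v.2 = o.2}

/-- The vertical line through `o`, without `o`. -/
def puncturedColumn (o : K × K) : Set (K × K) := {v | v.1 = o.1 ∧ v.2 ≠ o.2}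

end PuncturedLines

section Shifts

variable {K : Type*} [DecidableEq K]

/-- The permutation which adds `e` to the second coordinate along the column of abscissa `c`. -/
def shiftColumn [Add K] (c e : K) (v : K × K) : K × K :=
  if v.1 = c then (v.1, v.2 + e) else v

/-- The permutation which adds `e` to the first coordinate along the row of ordinate `d`. -/
def shiftRow [Add K] (d e : K) (v : K × K) : K × K :=
  if v.2 = d then (v.1 + e, v.2) else v

variable [Field K]

/-- The composite of the shift by `e.1` along the column `s.1`, the shift by `e.2` along the row
`s.2` and a hyperbolic rotation, in this order: the normal form of `π⁻¹ ∘ π_{(a,b)}`. -/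
def shiftedRotation (x : K) (o s e v : K × K) : K × K :=
  hyperbolicRotation x o (shiftRow s.2 e.2 (shiftColumn s.1 e.1 v))

variable {x : K} {o s e u v w : K × K}

theorem shiftedRotation_of_forall_eq_zero (h₁ : v.1 = s.1 → e.1 = 0) (h₂ : v.2 = s.2 → e.2 = 0) :
    shiftedRotation x o s e v = hyperbolicRotation x o v := by
  have hC : shiftColumn s.1 e.1 v = v := by
    unfold shiftColumn
    split_ifs with h
    · rw [h₁ h, add_zero]
    · rfl
  have hR : shiftRow s.2 e.2 v = v := by
    unfold shiftRow
    split_ifs with h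
    · rw [h₂ h, add_zero]
    · rfl
  rw [shiftedRotation, hC, hR]

theorem shiftedRotation_column (d : K) (h : d + e.1 = s.2 → e.2 = 0) :
    shiftedRotation x o s e (s.1, d) = hyperbolicRotation x o (s.1, d + e.1) := by
  by_cases hd : d + e.1 = s.2 <;> simp [shiftedRotation, shiftColumn, shiftRow, hd, h]

theorem shiftedRotation_column_of_add_eq {d : K} (h : d + e.1 = s.2) :
    shiftedRotation x o s e (s.1, d) = hyperbolicRotation x o (s.1 + e.2, s.2) := by
  simp [shiftedRotation, shiftColumn, shiftRow, h]

theorem shiftedRotation_row {c : K} (hc : c ≠ s.1) :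
    shiftedRotation x o s e (c, s.2) = hyperbolicRotation x o (c + e.2, s.2) := by
  simp [shiftedRotation, shiftColumn, shiftRow, hc]

theorem semiconj_swap_shiftedRotation (e : K) :
    Function.Semiconj Prod.swap (shiftedRotation x o s (0, e))
      (shiftedRotation x⁻¹ o.swap s.swap (e, 0)) := by
  rintro ⟨c, d⟩
  by_cases hd : d = s.2 <;>
    simp [shiftedRotation, shiftColumn, shiftRow, swap_hyperbolicRotation, hd]

variable [Fintype K] (hx : IsPrimitiveRoot x (Fintype.card K - 1))
include hx

theorem mem_orbit_shiftedRotation (hw : w ∈ orbit (hyperbolicRotation x o) v)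
    (hcol : ∀ y ∈ orbit (hyperbolicRotation x o) v, y.1 = s.1 → e.1 = 0 ∨ y = v ∨ y = w)
    (hrow : ∀ y ∈ orbit (hyperbolicRotation x o) v, y.2 = s.2 → e.2 = 0 ∨ y = v ∨ y = w) :
    w ∈ orbit (shiftedRotation x o s e) (hyperbolicRotation x o v) := by
  refine mem_orbit_apply_of_eqOn (mem_orbit_hyperbolicRotation_apply hx hw) ?_
  rintro y ⟨hy, hyvw⟩
  have hy' := orbit_subset_orbit apply_mem_orbit hy
  exact shiftedRotation_of_forall_eq_zero (fun h ↦ (hcol y hy' h).resolve_right hyvw)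
    fun h ↦ (hrow y hy' h).resolve_right hyvw

theorem puncturedColumn_subset_orbit (hu : u ∈ puncturedColumn o) (hs : s.1 ≠ o.1)
    (he : e.2 = 0) : puncturedColumn o ⊆ orbit (shiftedRotation x o s e) u := by
  rintro w ⟨hw₁, hw₂⟩
  refine orbit_subset_orbit_of_eqOn (fun y hy ↦ ?_)
    (mem_orbit_hyperbolicRotation_of_snd_ne hx hu.2 hw₂ (by rw [hw₁, hu.1]; ring))
  refine shiftedRotation_of_forall_eq_zero (fun h ↦ absurd ?_ hs) fun _ ↦ he
  rw [← h, (fst_eq_iff_of_mem_orbit_hyperbolicRotation hx hy).2 hu.1]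

theorem puncturedRow_subset_orbit_column {d : K} (hs₁ : s.1 ≠ o.1) (hs₂ : s.2 ≠ o.2)
    (hd : d + e.1 = o.2) : puncturedRow o ⊆ orbit (shiftedRotation x o s e) (s.1, d) := by
  rintro w ⟨hw₁, hw₂⟩
  have hw : w ∈ orbit (hyperbolicRotation x o) (s.1, o.2) :=
    mem_orbit_hyperbolicRotation_of_fst_ne hx hs₁ hw₁ (by simp [hw₂])
  refine orbit_subset_orbit apply_mem_orbit ?_
  rw [shiftedRotation_column d fun h ↦ absurd (h.symm.trans hd) hs₂, hd]
  refine mem_orbit_shiftedRotation hx hw (fun y hy h ↦ ?_) fun y hy h ↦ absurd ?_ hs₂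
  · exact .inr <| .inl <|
      eq_of_mem_orbit_hyperbolicRotation_of_fst_eq hx hy self_mem_orbit h hs₁
  · rw [← h, (snd_eq_iff_of_mem_orbit_hyperbolicRotation hx hy).2 rfl]

theorem puncturedColumn_subset_orbit_row (hs₁ : s.1 ≠ o.1) (hs₂ : s.2 ≠ o.2) :
    puncturedColumn o ⊆ orbit (shiftedRotation x o s e) (hyperbolicRotation x o (o.1, s.2)) := by
  rintro w ⟨hw₁, hw₂⟩
  have hw : w ∈ orbit (hyperbolicRotation x o) (o.1, s.2) :=
    mem_orbit_hyperbolicRotation_of_snd_ne hx hs₂ hw₂ (by simp [hw₁])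
  refine mem_orbit_shiftedRotation hx hw (fun y hy h ↦ absurd ?_ hs₁) fun y hy h ↦ ?_
  · rw [← h, (fst_eq_iff_of_mem_orbit_hyperbolicRotation hx hy).2 rfl]
  · exact .inr <| .inl <|
      eq_of_mem_orbit_hyperbolicRotation_of_snd_eq hx hy self_mem_orbit h hs₂

theorem row_mem_orbit_column {c d : K} (hs₁ : s.1 ≠ o.1) (hs₂ : s.2 ≠ o.2) (hd : d ≠ o.2)
    (h : (c - o.1) * (s.2 - o.2) = (s.1 - o.1) * (d - o.2)) :
    (c, s.2) ∈ orbit (shiftedRotation x o s e) (hyperbolicRotation x o (s.1, d)) := by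
  have hmem : (c, s.2) ∈ orbit (hyperbolicRotation x o) (s.1, d) :=
    mem_orbit_hyperbolicRotation_of_snd_ne hx hd hs₂ h
  refine mem_orbit_shiftedRotation hx hmem (fun y hy hy₁ ↦ ?_) fun y hy hy₂ ↦ ?_
  · exact .inr <| .inl <|
      eq_of_mem_orbit_hyperbolicRotation_of_fst_eq hx hy self_mem_orbit hy₁ hs₁
  · exact .inr <| .inr <| eq_of_mem_orbit_hyperbolicRotation_of_snd_eq hx hy hmem hy₂ hd

theorem column_mem_orbit_row {c d : K} (hs₁ : s.1 ≠ o.1) (hs₂ : s.2 ≠ o.2) (hc : c ≠ o.1)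
    (h : (s.1 - o.1) * (d - o.2) = (c - o.1) * (s.2 - o.2)) :
    (s.1, d) ∈ orbit (shiftedRotation x o s e) (hyperbolicRotation x o (c, s.2)) := by
  have hmem : (s.1, d) ∈ orbit (hyperbolicRotation x o) (c, s.2) :=
    mem_orbit_hyperbolicRotation_of_fst_ne hx hc hs₁ h
  refine mem_orbit_shiftedRotation hx hmem (fun y hy hy₁ ↦ ?_) fun y hy hy₂ ↦ ?_
  · exact .inr <| .inr <| eq_of_mem_orbit_hyperbolicRotation_of_fst_eq hx hy hmem hy₁ hc
  · exact .inr <| .inl <|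
      eq_of_mem_orbit_hyperbolicRotation_of_snd_eq hx hy self_mem_orbit hy₂ hs₂

theorem orbit_hyperbolicRotation_subset_orbit_column {d : K} (hs : s.1 ≠ o.1) (he : e.2 = 0) :
    orbit (hyperbolicRotation x o) (s.1, d + e.1) ⊆ orbit (shiftedRotation x o s e) (s.1, d) := by
  intro w hw
  refine orbit_subset_orbit apply_mem_orbit ?_
  rw [shiftedRotation_column d fun _ ↦ he]
  refine mem_orbit_shiftedRotation hx hw (fun y hy h ↦ ?_) fun _ _ _ ↦ .inl he
  exact .inr <| .inl <| eq_of_mem_orbit_hyperbolicRotation_of_fst_eq hx hy self_mem_orbit h hs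

theorem exists_column_mem_orbit (hs : s.1 ≠ o.1) (he : e.2 = 0) (hu : u.1 ≠ o.1) :
    ∃ d, (s.1, d) ∈ orbit (shiftedRotation x o s e) u := by
  obtain ⟨_, hmem⟩ := exists_fst_eq_mem_orbit_hyperbolicRotation hx hs hu
  obtain ⟨⟨_, d⟩, hd, rfl⟩ := exists_mem_orbit_of_eqOn_diff
    (g := shiftedRotation x o s e) (S := {v | v.1 = s.1})
    (fun y hy ↦ shiftedRotation_of_forall_eq_zero (fun h ↦ absurd h hy.2) fun _ ↦ he)
    ⟨_, hmem, rfl⟩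
  exact ⟨d, hd⟩

theorem exists_column_or_row_mem_orbit (hs₁ : s.1 ≠ o.1) (hs₂ : s.2 ≠ o.2) (hu : u ≠ o) :
    ∃ v ∈ orbit (shiftedRotation x o s e) u, v.1 = s.1 ∨ v.2 = s.2 := by
  refine exists_mem_orbit_of_eqOn_diff (f := hyperbolicRotation x o)
    (S := {v | v.1 = s.1 ∨ v.2 = s.2}) (fun y hy ↦ ?_) ?_
  · exact shiftedRotation_of_forall_eq_zero (fun h ↦ absurd (.inl h) hy.2)
      fun h ↦ absurd (.inr h) hy.2
  · by_cases hu₁ : u.1 = o.1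
    · have hu₂ : u.2 ≠ o.2 := fun h ↦ hu (Prod.ext hu₁ h)
      exact ⟨(o.1, s.2), mem_orbit_hyperbolicRotation_of_snd_ne hx hu₂ hs₂ (by simp [hu₁]),
        .inr rfl⟩
    · obtain ⟨_, hmem⟩ := exists_fst_eq_mem_orbit_hyperbolicRotation hx hs₁ hu₁
      exact ⟨_, hmem, .inl rfl⟩

theorem puncturedColumn_subset_or_exists_column_mem_orbit (hs₁ : s.1 ≠ o.1) (hs₂ : s.2 ≠ o.2)
    (hu : u ≠ o) :
    puncturedColumn o ⊆ orbit (shiftedRotation x o s e) u ∨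
      ∃ d, (s.1, d) ∈ orbit (shiftedRotation x o s e) u := by
  obtain ⟨⟨c, d⟩, hv, rfl | rfl⟩ := exists_column_or_row_mem_orbit (e := e) hx hs₁ hs₂ hu
  · exact .inr ⟨d, hv⟩
  by_cases hc : c = s.1
  · exact .inr ⟨s.2, hc ▸ hv⟩
  have hTv := orbit_subset_orbit (orbit_subset_orbit hv apply_mem_orbit)
  rw [shiftedRotation_row hc] at hTv
  by_cases hco : c + e.2 = o.1
  · exact .inl ((puncturedColumn_subset_orbit_row hx hs₁ hs₂).trans (hco ▸ hTv))
  · have hs₁' := sub_ne_zero.2 hs₁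
    exact .inr ⟨o.2 + (c + e.2 - o.1) * (s.2 - o.2) / (s.1 - o.1),
      hTv (column_mem_orbit_row hx hs₁ hs₂ hco (by field_simp; ring))⟩

theorem shifted_row_mem_orbit_column {c d : K} (hs₁ : s.1 ≠ o.1) (hs₂ : s.2 ≠ o.2)
    (hd : d + e.1 ≠ o.2) (hc : (c - o.1) * (s.2 - o.2) = (s.1 - o.1) * (d + e.1 - o.2)) :
    hyperbolicRotation x o (c + e.2, s.2) ∈ orbit (shiftedRotation x o s e) (s.1, d) := by
  by_cases hds : d + e.1 = s.2
  · have hcs : c = s.1 := sub_left_injective (mul_right_cancel₀ (sub_ne_zero.2 hs₂) (hds ▸ hc))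
    rw [hcs, ← shiftedRotation_column_of_add_eq hds]
    exact apply_mem_orbit
  · have hcs : c ≠ s.1 := by
      rintro rfl
      exact hds (sub_left_injective (mul_left_cancel₀ (sub_ne_zero.2 hs₁) hc)).symm
    have hmem : (c, s.2) ∈ orbit (shiftedRotation x o s e) (shiftedRotation x o s e (s.1, d)) := by
      rw [shiftedRotation_column d fun h ↦ absurd h hds]
      exact row_mem_orbit_column hx hs₁ hs₂ hd hc
    rw [← shiftedRotation_row hcs]
    exact orbit_subset_orbit (orbit_subset_orbit apply_mem_orbit hmem) apply_mem_orbit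

-- The point `(s.1, d)` hops to the hyperbola of `(s.1, d + e.1)`, runs to its point `(c, s.2)` on
-- the row, hops to the hyperbola of `(c + e.2, s.2)` and runs back to the column.
theorem axis_subset_or_column_hop_mem_orbit (d : K) (hs₁ : s.1 ≠ o.1) (hs₂ : s.2 ≠ o.2) :
    puncturedRow o ⊆ orbit (shiftedRotation x o s e) (s.1, d) ∨
      puncturedColumn o ⊆ orbit (shiftedRotation x o s e) (s.1, d) ∨
      (s.1, d + (e.1 * (s.1 - o.1) + e.2 * (s.2 - o.2)) / (s.1 - o.1)) ∈
        orbit (shiftedRotation x o s e) (s.1, d) := by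
  by_cases hd : d + e.1 = o.2
  · exact .inl (puncturedRow_subset_orbit_column hx hs₁ hs₂ hd)
  right
  have hs₁' := sub_ne_zero.2 hs₁
  have hs₂' := sub_ne_zero.2 hs₂
  obtain ⟨c, hc⟩ : ∃ c, (c - o.1) * (s.2 - o.2) = (s.1 - o.1) * (d + e.1 - o.2) :=
    ⟨o.1 + (s.1 - o.1) * (d + e.1 - o.2) / (s.2 - o.2), by field_simp; ring⟩
  have hrow := shifted_row_mem_orbit_column hx hs₁ hs₂ hd hc
  by_cases hco : c + e.2 = o.1
  · exact .inl <| (puncturedColumn_subset_orbit_row hx hs₁ hs₂).trans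
      (orbit_subset_orbit (hco ▸ hrow))
  · refine .inr <| orbit_subset_orbit hrow (column_mem_orbit_row hx hs₁ hs₂ hco ?_)
    field_simp
    linear_combination -hc

end Shifts

section PrimeField

variable {p : ℕ} [Fact p.Prime]

theorem forall_of_forall_add {P : ZMod p → Prop} {δ y : ZMod p} (hδ : δ ≠ 0) (hy : P y)
    (h : ∀ z, P z → P (z + δ)) (z : ZMod p) : P z := by
  have hP : ∀ n : ℕ, P (y + n * δ) := fun n ↦ by
    induction n with
    | zero => simpa using hy
    | succ n ih => simpa [add_mul, add_assoc] using h _ ih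
  simpa [hδ] using hP ((z - y) / δ).val

variable {x : ZMod p} {o s e u : ZMod p × ZMod p}
  (hx : IsPrimitiveRoot x (Fintype.card (ZMod p) - 1))
include hx

theorem compl_subset_orbit_or_puncturedColumn_subset_orbit {a : ZMod p} (ha : a ≠ 0)
    (hs : s.1 ≠ o.1) (hu : u ≠ o) :
    {w | w.1 ≠ o.1} ⊆ orbit (shiftedRotation x o s (a, 0)) u ∨
      puncturedColumn o ⊆ orbit (shiftedRotation x o s (a, 0)) u := by
  by_cases hu₁ : u.1 = o.1
  · exact .inr (puncturedColumn_subset_orbit hx ⟨hu₁, fun h ↦ hu (Prod.ext hu₁ h)⟩ hs rfl)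
  left
  obtain ⟨d₀, hd₀⟩ := exists_column_mem_orbit (e := (a, 0)) hx hs rfl hu₁
  have hsub (d : ZMod p) := orbit_hyperbolicRotation_subset_orbit_column
    (e := (a, 0)) (d := d) hx hs rfl
  have hcol : ∀ d, (s.1, d) ∈ orbit (shiftedRotation x o s (a, 0)) u :=
    forall_of_forall_add ha hd₀ fun d hd ↦ orbit_subset_orbit hd (hsub d self_mem_orbit)
  intro w hw
  have hs' := sub_ne_zero.2 hs
  refine orbit_subset_orbit (hcol (o.2 + (w.1 - o.1) * (w.2 - o.2) / (s.1 - o.1) - a)) <|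
    hsub _ (mem_orbit_hyperbolicRotation_of_fst_ne hx hs hw ?_)
  field_simp
  ring

theorem compl_subset_orbit_or_puncturedRow_subset_orbit {b : ZMod p} (hb : b ≠ 0)
    (hs : s.2 ≠ o.2) (hu : u ≠ o) :
    {w | w.2 ≠ o.2} ⊆ orbit (shiftedRotation x o s (0, b)) u ∨
      puncturedRow o ⊆ orbit (shiftedRotation x o s (0, b)) u := by
  have hswap : Function.Semiconj Prod.swap (shiftedRotation x⁻¹ o.swap s.swap (b, 0))
      (shiftedRotation x o s (0, b)) :=
    (semiconj_swap_shiftedRotation b).inverse_left Prod.swap_swap Prod.swap_swap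
  refine (compl_subset_orbit_or_puncturedColumn_subset_orbit (o := o.swap) (u := u.swap) hx.inv hb
    (s := s.swap) hs (Prod.swap_injective.ne hu)).imp (fun h w hw ↦ ?_) fun h w hw ↦ ?_
  · exact map_mem_orbit_of_semiconj hswap (h (a := w.swap) hw)
  · exact map_mem_orbit_of_semiconj hswap (h (a := w.swap) hw.symm)

theorem puncturedRow_subset_orbit_or_puncturedColumn_subset_orbit (hs₁ : s.1 ≠ o.1)
    (hs₂ : s.2 ≠ o.2) (he : e.1 * (s.1 - o.1) + e.2 * (s.2 - o.2) ≠ 0) (hu : u ≠ o) :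
    puncturedRow o ⊆ orbit (shiftedRotation x o s e) u ∨
      puncturedColumn o ⊆ orbit (shiftedRotation x o s e) u := by
  by_contra! ⟨hrow, hcol⟩
  obtain ⟨d₀, hd₀⟩ : ∃ d, (s.1, d) ∈ orbit (shiftedRotation x o s e) u :=
    (puncturedColumn_subset_or_exists_column_mem_orbit hx hs₁ hs₂ hu).resolve_left hcol
  have hop (d : ZMod p) (hd : (s.1, d) ∈ orbit (shiftedRotation x o s e) u) :
      (s.1, d + (e.1 * (s.1 - o.1) + e.2 * (s.2 - o.2)) / (s.1 - o.1)) ∈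
        orbit (shiftedRotation x o s e) u := by
    have hsub := orbit_subset_orbit hd
    rcases axis_subset_or_column_hop_mem_orbit hx d hs₁ hs₂ with h | h | h
    · exact absurd (h.trans hsub) hrow
    · exact absurd (h.trans hsub) hcol
    · exact hsub h
  have hall := forall_of_forall_add (div_ne_zero he (sub_ne_zero.2 hs₁)) hd₀ hop
  exact hrow <| (puncturedRow_subset_orbit_column hx hs₁ hs₂ (sub_add_cancel o.2 e.1)).trans
    (orbit_subset_orbit (hall _))

end PrimeField

section Parts

variable {p : ℕ} {x : ZMod p} {O O' : Set (ZMod p × ZMod p)} {o : ZMod p × ZMod p}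

/-- `O` contains an element of `𝓘⁽²⁾` and an element of its complement `𝓘⁽¹⁾`. -/
def MeetsBothParts (x : ZMod p) (O : Set (ZMod p × ZMod p)) : Prop :=
  (∃ q ∈ O, q ∈ I2 p x) ∧ ∃ q ∈ O, q ∉ I2 p x

theorem MeetsBothParts.mono (h : MeetsBothParts x O) (hO : O ⊆ O') : MeetsBothParts x O' :=
  ⟨h.1.imp fun _ hq ↦ ⟨hO hq.1, hq.2⟩, h.2.imp fun _ hq ↦ ⟨hO hq.1, hq.2⟩⟩

theorem meetsBothParts_of_curve (hp5 : 5 ≤ p) {φ : ZMod p → ZMod p × ZMod p}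
    {z₀ z₁ z₂ z₃ : ZMod p} (hO : ∀ z ≠ z₀, φ z ∈ O) (hne : z₁ ≠ z₂) (h₁ : φ z₁ ∈ I2 p x)
    (h₂ : φ z₂ ∈ I2 p x) (h : ∀ z, φ z ∈ I2 p x → z = z₁ ∨ z = z₂ ∨ z = z₃) :
    MeetsBothParts x O := by
  constructor
  · by_cases h₀ : z₁ = z₀
    · exact ⟨φ z₂, hO z₂ fun h' ↦ hne (h₀.trans h'.symm), h₂⟩
    · exact ⟨φ z₁, hO z₁ h₀, h₁⟩
  · have : NeZero p := ⟨by omega⟩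
    have hcard : Finset.card {z₀, z₁, z₂, z₃} < (Finset.univ : Finset (ZMod p)).card := by
      rw [Finset.card_univ, ZMod.card]
      exact Finset.card_le_four.trans_lt hp5
    obtain ⟨z, -, hz⟩ := Finset.exists_mem_notMem_of_card_lt_card hcard
    simp only [Finset.mem_insert, Finset.mem_singleton, not_or] at hz
    exact ⟨φ z, hO z hz.1, fun hI ↦ by have := h z hI; tauto⟩

theorem meetsBothParts_puncturedColumn_zero (hp3 : 3 ≤ p) :
    MeetsBothParts x (puncturedColumn 0) := by
  have : Fact (1 < p) := ⟨by omega⟩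
  have : Fact (2 < p) := ⟨hp3⟩
  exact ⟨⟨(0, 1), by simp [puncturedColumn], .inl rfl⟩,
    ⟨(0, -1), by simp [puncturedColumn], by simp [I2, ZMod.neg_one_ne_one]⟩⟩

theorem meetsBothParts_puncturedRow_zero (hp3 : 3 ≤ p) (hx0 : x ≠ 0) :
    MeetsBothParts x (puncturedRow 0) := by
  have : Fact (1 < p) := ⟨by omega⟩
  have : Fact (2 < p) := ⟨hp3⟩
  exact ⟨⟨(1, 0), by simp [puncturedRow], .inr (.inl rfl)⟩,
    ⟨(-1, 0), by simp [puncturedRow], by simp [I2, ZMod.neg_one_ne_one, hx0]⟩⟩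

variable [Fact p.Prime]

theorem meetsBothParts_puncturedRow (hp5 : 5 ≤ p) (hx0 : x ≠ 0) (hx1 : x ≠ 1) (ho : o.2 ≠ 0) :
    MeetsBothParts x (puncturedRow o) := by
  refine meetsBothParts_of_curve hp5 (φ := fun c ↦ (c, o.2)) (z₀ := o.1) (z₁ := o.2)
    (z₂ := x⁻¹ * o.2) (z₃ := 0) (fun c hc ↦ ⟨hc, rfl⟩) ?_ ?_ ?_ ?_
  · simpa [ho, eq_comm] using hx1
  · simp [I2, ho]
  · simp [I2, ho, hx0, mul_right_comm]
  · rintro c (h | h | ⟨-, h⟩ | ⟨-, h⟩)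
    · exact .inr (.inr (congrArg Prod.fst h))
    · exact absurd (congrArg Prod.snd h) ho
    · exact .inl h.symm
    · exact .inr (.inl (by rw [show o.2 = c * x from h]; field_simp))

theorem meetsBothParts_puncturedColumn (hp5 : 5 ≤ p) (hx1 : x ≠ 1) (ho : o.1 ≠ 0) :
    MeetsBothParts x (puncturedColumn o) := by
  refine meetsBothParts_of_curve hp5 (φ := fun d ↦ (o.1, d)) (z₀ := o.2) (z₁ := o.1)
    (z₂ := o.1 * x) (z₃ := 0) (fun d hd ↦ ⟨rfl, hd⟩) ?_ ?_ ?_ ?_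
  · simpa [ho, eq_comm] using hx1
  · simp [I2, ho]
  · simp [I2, ho]
  · rintro d (h | h | ⟨-, h⟩ | ⟨-, h⟩)
    · exact absurd (congrArg Prod.fst h) ho
    · exact .inr (.inr (congrArg Prod.snd h))
    · exact .inl h
    · exact .inr (.inl h)

theorem meetsBothParts_hyperbola (hp5 : 5 ≤ p) (hx : IsPrimitiveRoot x (Fintype.card (ZMod p) - 1))
    {κ : ZMod p} (hκ : κ ≠ 0) : MeetsBothParts x {v | v.1 * v.2 = κ} := by
  have hx0 := primitiveRoot_ne_zero hx
  have hpow {n : ℕ} (hn : n ≠ 0) (hn4 : n < 4) : x ^ n ≠ 1 :=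
    hx.pow_ne_one_of_pos_of_lt hn (by rw [ZMod.card]; omega)
  have hx1 : x ≠ 1 := by simpa using hpow one_ne_zero (by simp)
  have hx2 : x ^ 2 ≠ 1 := hpow two_ne_zero (by simp)
  have hx3 : x ^ 3 ≠ 1 := hpow three_ne_zero (by simp)
  obtain ⟨t, ht0, rfl | rfl⟩ := exists_sq_eq_or_mul_sq_eq hx hκ
  · refine ⟨⟨(t, t), (pow_two t).symm, .inr (.inr (.inl ⟨ht0, rfl⟩))⟩,
      ⟨(t * x, t / x), ?_, ?_⟩⟩
    · rw [Set.mem_ofPred_eq]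
      field_simp
    · rintro (h | h | ⟨-, h⟩ | ⟨-, h⟩)
      · exact mul_ne_zero ht0 hx0 (congrArg Prod.fst h)
      · exact div_ne_zero ht0 hx0 (congrArg Prod.snd h)
      · exact hx2 (mul_left_cancel₀ ht0 (by field_simp at h; linear_combination -t * h))
      · exact hx3 (mul_left_cancel₀ ht0 (by field_simp at h; linear_combination -t * h))
  · refine ⟨⟨(t, t * x), by rw [Set.mem_ofPred_eq]; ring, .inr (.inr (.inr ⟨ht0, rfl⟩))⟩,
      ⟨(t * x, t), by rw [Set.mem_ofPred_eq]; ring, ?_⟩⟩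
    rintro (h | h | ⟨-, h⟩ | ⟨-, h⟩)
    · exact mul_ne_zero ht0 hx0 (congrArg Prod.fst h)
    · exact ht0 (congrArg Prod.snd h)
    · exact hx1 (mul_left_cancel₀ ht0 (by simpa using h.symm))
    · exact hx2 (mul_left_cancel₀ ht0 (by simp only at h; linear_combination -h))

end Parts

section NormalForm

variable {p : ℕ} {x : ZMod p} {o s e u : ZMod p × ZMod p}

theorem piab_eq_add_shiftRow_shiftColumn (a b : ZMod p) (v : ZMod p × ZMod p) :
    piab x a b v = (a, b) + shiftRow (-b) (x * b) (shiftColumn 0 a v) := by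
  obtain ⟨c, d⟩ := v
  have hrow (d : ZMod p) : d = -b ↔ b + d = 0 := by rw [eq_neg_iff_add_eq_zero, add_comm]
  have hcol : b + (d + a) = a + b + d := by ring
  by_cases hc : c = 0
  · by_cases hd : a + b + d = 0 <;> simp [piab, shiftColumn, shiftRow, hc, hrow, hcol, hd]
  · by_cases hd : b + d = 0 <;> simp [piab, shiftColumn, shiftRow, hc, hrow, hd, add_assoc]

variable [Fact p.Prime]

theorem piInvPiab_eq_shiftedRotation (hx0 : x ≠ 0) :
    piInvPiab x ((x⁻¹ - 1) * o.1) ((x - 1) * o.2) =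
      shiftedRotation x o (0, (1 - x) * o.2) ((x⁻¹ - 1) * o.1, x * ((x - 1) * o.2)) := by
  funext v
  rw [piInvPiab, shiftedRotation, piab_eq_add_shiftRow_shiftColumn,
    show -((x - 1) * o.2) = (1 - x) * o.2 by ring]
  ext <;> simp only [hyperbolicRotation, Prod.fst_add, Prod.snd_add] <;> field_simp <;> ring

theorem piInvPiab_eq_self (hx0 : x ≠ 0) :
    piInvPiab x ((x⁻¹ - 1) * o.1) ((x - 1) * o.2) o = o := by
  rw [piInvPiab_eq_shiftedRotation hx0,
    shiftedRotation_of_forall_eq_zero (fun h ↦ by simp [h]) fun h ↦ ?_, hyperbolicRotation_self]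
  linear_combination (x - 1) * h

variable (hx : IsPrimitiveRoot x (Fintype.card (ZMod p) - 1))
include hx

theorem meetsBothParts_orbit_hyperbolicRotation_zero (hp5 : 5 ≤ p) (hu : u ≠ 0) :
    MeetsBothParts x (orbit (hyperbolicRotation x 0) u) := by
  by_cases hu₁ : u.1 = 0
  · have hu₂ : u.2 ≠ 0 := fun h ↦ hu (Prod.ext hu₁ h)
    exact (meetsBothParts_puncturedColumn_zero (by omega)).mono fun w hw ↦
      mem_orbit_hyperbolicRotation_of_snd_ne hx hu₂ hw.2 (by simp [hu₁, hw.1])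
  by_cases hu₂ : u.2 = 0
  · exact (meetsBothParts_puncturedRow_zero (by omega) (primitiveRoot_ne_zero hx)).mono fun w hw ↦
      mem_orbit_hyperbolicRotation_of_fst_ne hx hu₁ hw.1 (by simp [hu₂, hw.2])
  · refine (meetsBothParts_hyperbola hp5 hx (mul_ne_zero hu₁ hu₂)).mono fun w hw ↦ ?_
    refine mem_orbit_hyperbolicRotation_of_fst_ne hx hu₁ (fun h ↦ ?_) (by simpa using hw)
    exact mul_ne_zero hu₁ hu₂ (by rw [← hw, h, Prod.fst_zero, zero_mul])

theorem meetsBothParts_orbit_shiftedRotation_of_snd_eq_zero (hp5 : 5 ≤ p) {a : ZMod p} (ha : a ≠ 0)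
    (hs : s.1 ≠ o.1) (ho₁ : o.1 ≠ 0) (hu : u ≠ o) :
    MeetsBothParts x (orbit (shiftedRotation x o s (a, 0)) u) := by
  have hx1 := primitiveRoot_ne_one hx (by rw [ZMod.card]; omega)
  rcases compl_subset_orbit_or_puncturedColumn_subset_orbit hx ha hs hu with h | h
  · exact (meetsBothParts_puncturedRow hp5 (primitiveRoot_ne_zero hx) hx1
      (o := (o.1, 1)) one_ne_zero).mono fun w hw ↦ h hw.1
  · exact (meetsBothParts_puncturedColumn hp5 hx1 ho₁).mono h

theorem meetsBothParts_orbit_shiftedRotation_of_fst_eq_zero (hp5 : 5 ≤ p) {b : ZMod p} (hb : b ≠ 0)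
    (hs : s.2 ≠ o.2) (ho₂ : o.2 ≠ 0) (hu : u ≠ o) :
    MeetsBothParts x (orbit (shiftedRotation x o s (0, b)) u) := by
  have hx1 := primitiveRoot_ne_one hx (by rw [ZMod.card]; omega)
  rcases compl_subset_orbit_or_puncturedRow_subset_orbit hx hb hs hu with h | h
  · exact (meetsBothParts_puncturedColumn hp5 hx1
      (o := (1, o.2)) one_ne_zero).mono fun w hw ↦ h hw.2
  · exact (meetsBothParts_puncturedRow hp5 (primitiveRoot_ne_zero hx) hx1 ho₂).mono h

theorem meetsBothParts_orbit_shiftedRotation_of_ne_zero (hp5 : 5 ≤ p) (ho₁ : o.1 ≠ 0)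
    (ho₂ : o.2 ≠ 0) (hs₁ : s.1 ≠ o.1) (hs₂ : s.2 ≠ o.2)
    (he : e.1 * (s.1 - o.1) + e.2 * (s.2 - o.2) ≠ 0) (hu : u ≠ o) :
    MeetsBothParts x (orbit (shiftedRotation x o s e) u) := by
  have hx1 := primitiveRoot_ne_one hx (by rw [ZMod.card]; omega)
  rcases puncturedRow_subset_orbit_or_puncturedColumn_subset_orbit hx hs₁ hs₂ he hu with h | h
  · exact (meetsBothParts_puncturedRow hp5 (primitiveRoot_ne_zero hx) hx1 ho₂).mono h
  · exact (meetsBothParts_puncturedColumn hp5 hx1 ho₁).mono h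

theorem meetsBothParts_orbit_piInvPiab (hp5 : 5 ≤ p) (hu : u ≠ o) :
    MeetsBothParts x (orbit (piInvPiab x ((x⁻¹ - 1) * o.1) ((x - 1) * o.2)) u) := by
  have hx0 := primitiveRoot_ne_zero hx
  have hx1 := primitiveRoot_ne_one hx (by rw [ZMod.card]; omega)
  have hx1' : x - 1 ≠ 0 := sub_ne_zero.2 hx1
  have hxinv : x⁻¹ - 1 ≠ 0 := sub_ne_zero.2 (inv_ne_one.2 hx1)
  have hs₂ (ho₂ : o.2 ≠ 0) : (1 - x) * o.2 ≠ o.2 := fun h ↦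
    mul_ne_zero hx0 ho₂ (by linear_combination -h)
  rw [piInvPiab_eq_shiftedRotation hx0]
  by_cases ho₁ : o.1 = 0 <;> by_cases ho₂ : o.2 = 0
  · obtain rfl : o = 0 := Prod.ext ho₁ ho₂
    have hrot : shiftedRotation x 0 (0, 0) (0, 0) = hyperbolicRotation x 0 :=
      funext fun v ↦ shiftedRotation_of_forall_eq_zero (fun _ ↦ rfl) fun _ ↦ rfl
    simpa [hrot] using meetsBothParts_orbit_hyperbolicRotation_zero hx hp5 hu
  · rw [ho₁, mul_zero]
    exact meetsBothParts_orbit_shiftedRotation_of_fst_eq_zero hx hp5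
      (mul_ne_zero hx0 (mul_ne_zero hx1' ho₂)) (hs₂ ho₂) ho₂ hu
  · simp only [ho₂, mul_zero]
    exact meetsBothParts_orbit_shiftedRotation_of_snd_eq_zero hx hp5 (mul_ne_zero hxinv ho₁)
      (Ne.symm ho₁) ho₁ hu
  · refine meetsBothParts_orbit_shiftedRotation_of_ne_zero hx hp5 ho₁ ho₂ (Ne.symm ho₁)
      (hs₂ ho₂) ?_ hu
    have hsq := sq_ne_primitiveRoot_pow_three_mul_sq hx
      (by rw [ZMod.ringChar_zmod_n]; omega) (c := o.1) ho₂
    convert mul_ne_zero (div_ne_zero hx1' hx0) (sub_ne_zero.2 hsq) using 1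
    field_simp
    ring

end NormalForm

/-- For `p ≥ 5` and every `(a,b)`, every orbit of size at least 2 of the permutation
`π⁻¹ ∘ π_{(a,b)}` contains at least one element of `𝓘⁽²⁾` and at least one element
of its complement `𝓘⁽¹⁾`. -/
theorem stmt17 (p : ℕ) (hp : p.Prime) (hodd : Odd p) (hp5 : 5 ≤ p) (x : ZMod p)
    (hx : ∀ z : ZMod p, z ≠ 0 → ∃ k : ℕ, x ^ k = z) :
    ∀ (a b : ZMod p) (u : ZMod p × ZMod p),
      2 ≤ (orbit (piInvPiab x a b) u).ncard →
        (∃ q ∈ orbit (piInvPiab x a b) u, q ∈ I2 p x) ∧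
        (∃ q ∈ orbit (piInvPiab x a b) u, q ∉ I2 p x) := by
  intro a b u hu
  have : Fact p.Prime := ⟨hp⟩
  have hx0 : x ≠ 0 :=
    ne_zero_of_forall_exists_pow_eq (by rw [ZMod.ringChar_zmod_n]; omega) hx
  have hroot := isPrimitiveRoot_of_forall_exists_pow_eq hx0 hx
  have hx1 : x ≠ 1 := primitiveRoot_ne_one hroot (by rw [ZMod.card]; omega)
  obtain ⟨o, rfl, rfl⟩ : ∃ o : ZMod p × ZMod p, (x⁻¹ - 1) * o.1 = a ∧ (x - 1) * o.2 = b :=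
    ⟨(a / (x⁻¹ - 1), b / (x - 1)),
      mul_div_cancel₀ _ (sub_ne_zero.2 (inv_ne_one.2 hx1)),
      mul_div_cancel₀ _ (sub_ne_zero.2 hx1)⟩
  have huo : u ≠ o := by
    rintro rfl
    rw [orbit_eq_singleton (piInvPiab_eq_self hx0), Set.ncard_singleton] at hu
    omega
  exact meetsBothParts_orbit_piInvPiab hroot hp5 huo
end
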